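/- Let n ≥ 1 and 1 < k < 2. There is a constant C such that for all v ∈ 𝒮(ℝⁿ), ‖⟨ω⟩^{k−1} x v‖_{L²} ≤ C(‖⟨ω⟩^k v‖_{L²} + ‖⟨x⟩^k v‖_{L²}); equivalently, ‖ω^{k−1} x v‖_{L²} ≤ C ‖ω^k v‖_{L²}^{1−1/k} ‖|x|^k v‖_{L²}^{1/k}. In particular Σ^k ⊂ V^k with ‖v;V^k‖ ≤ C‖v;Σ^k‖. -/

import Mathlib

open MeasureTheory Complex
open scoped FourierTransform ENNReal

noncomputable section

abbrev Vn (n : ℕ) := EuclideanSpace ℝ (Fin n)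

/-- `ω^ℓ = (−Δ)^{ℓ/2}` as the Fourier multiplier `|ξ|^ℓ`. -/
def omMul (n : ℕ) (ℓ : ℝ) (f : Vn n → ℂ) : Vn n → ℂ :=
  𝓕⁻ (fun ξ => (((2 * Real.pi * ‖ξ‖) ^ ℓ : ℝ) : ℂ) * 𝓕 f ξ)

/-- `⟨ω⟩^k = (1−Δ)^{k/2}` as a Fourier multiplier. -/
def japMul (n : ℕ) (k : ℝ) (f : Vn n → ℂ) : Vn n → ℂ :=
  𝓕⁻ (fun ξ => (((1 + (2 * Real.pi * ‖ξ‖) ^ 2) ^ (k / 2) : ℝ) : ℂ) * 𝓕 f ξ)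

/-- The `V^k` norm `‖⟨ω⟩^k v‖₂ ∨ ‖⟨ω⟩^{k−1} x v‖₂`. -/
def VkNorm (n : ℕ) (k : ℝ) (f : Vn n → ℂ) : ℝ≥0∞ :=
  eLpNorm (japMul n k f) 2 volume ⊔
    eLpNorm (fun x : Vn n => (WithLp.equiv 2 (Fin n → ℂ)).symm
      (fun j => japMul n (k - 1) (fun y => (y j : ℂ) * f y) x)) 2 volume

/-- The `Σ^k` norm `‖⟨ω⟩^k v‖₂ ∨ ‖⟨x⟩^k v‖₂`. -/
def SigkNorm (n : ℕ) (k : ℝ) (f : Vn n → ℂ) : ℝ≥0∞ :=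
  eLpNorm (japMul n k f) 2 volume ⊔
    eLpNorm (fun x : Vn n => (((1 + ‖x‖ ^ 2) ^ (k / 2) : ℝ) : ℂ) * f x) 2 volume


lemma aux_fourier_cont {n : ℕ} {f : Vn n → ℂ} (hf : Integrable f) : Continuous (𝓕 f) :=
  VectorFourier.fourierIntegral_continuous Real.continuous_fourierChar
    (innerSL ℝ).continuous₂ hf

lemma aux_plancherel {n : ℕ} {f : Vn n → ℂ} (hf : Integrable f) (hf2 : MemLp f 2) :
    eLpNorm (𝓕 f) 2 volume = eLpNorm f 2 volume := by
  have hae : ((𝓕 (hf2.toLp f) : Lp ℂ 2 (volume : Measure (Vn n))) : Vn n → ℂ) =ᵐ[volume] 𝓕 f := by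
    apply ae_eq_of_integral_contDiff_smul_eq
    · exact (Lp.memLp _).locallyIntegrable (by norm_num)
    · exact (aux_fourier_cont hf).locallyIntegrable
    · intro g g_smooth g_cpt
      have hg₁ : HasCompactSupport (Complex.ofRealCLM ∘ g) := g_cpt.comp_left rfl
      have hg₂ : ContDiff ℝ (⊤ : ℕ∞) (Complex.ofRealCLM ∘ g) := by fun_prop
      have h1 := congrArg (fun T => T (hg₁.toSchwartzMap hg₂))
        (Lp.fourier_toTemperedDistribution_eq (hf2.toLp f))
      simp only [TemperedDistribution.fourier_apply, Lp.toTemperedDistribution_apply] at h1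
      have h2 : ∫ x, (hg₁.toSchwartzMap hg₂) x •
          ((𝓕 (hf2.toLp f) : Lp ℂ 2 (volume : Measure (Vn n))) : Vn n → ℂ) x
          = ∫ x, g x • ((𝓕 (hf2.toLp f) : Lp ℂ 2 (volume : Measure (Vn n))) : Vn n → ℂ) x := by
        congr 1
      rw [← h2, ← h1]
      have h3 : ∫ x, (𝓕 (hg₁.toSchwartzMap hg₂)) x • (hf2.toLp f) x
          = ∫ x, (𝓕 (hg₁.toSchwartzMap hg₂)) x • f x := by
        apply integral_congr_ae
        filter_upwards [hf2.coeFn_toLp] with x hx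
        rw [hx]
      rw [h3]
      exact VectorFourier.integral_fourierIntegral_smul_eq_flip (L := innerₗ (Vn n))
        Real.continuous_fourierChar continuous_inner (hg₁.toSchwartzMap hg₂).integrable hf |>.trans
        (by
          congr 1
          ext x
          congr 1
          rw [flip_innerₗ]
          rfl)
  rw [← eLpNorm_congr_ae hae]
  have h := Lp.norm_fourier_eq (hf2.toLp f)
  rw [Lp.norm_def, Lp.norm_def, ENNReal.toReal_eq_toReal_iff' (Lp.eLpNorm_ne_top _)
    (Lp.eLpNorm_ne_top _)] at h
  rw [h]
  exact eLpNorm_congr_ae hf2.coeFn_toLp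

lemma aux_plancherel_inv {n : ℕ} {f : Vn n → ℂ} (hf : Integrable f) (hf2 : MemLp f 2) :
    eLpNorm (𝓕⁻ f) 2 volume = eLpNorm f 2 volume := by
  rw [← aux_plancherel hf hf2]
  have : (𝓕⁻ f) = (𝓕 f) ∘ (fun x => -x) := by
    ext x
    rw [Real.fourierInv_eq_fourier_neg]; rfl
  rw [this]
  exact eLpNorm_comp_measurePreserving (aux_fourier_cont hf).aestronglyMeasurable
    (Measure.measurePreserving_neg _)

lemma aux_eLpNorm_sq {α E : Type*} [MeasurableSpace α] [NormedAddCommGroup E] (μ : Measure α)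
    (f : α → E) : eLpNorm f 2 μ ^ 2 = ∫⁻ x, ‖f x‖ₑ ^ 2 ∂μ := by
  have h := eLpNorm_nnreal_pow_eq_lintegral (μ := μ) (f := f) (p := 2) (by norm_num)
  simpa using h

lemma aux_planch_lint {n : ℕ} {f : Vn n → ℂ} (hf : Integrable f) (hf2 : MemLp f 2) :
    ∫⁻ ξ, ‖𝓕 f ξ‖ₑ ^ 2 = ∫⁻ x, ‖f x‖ₑ ^ 2 := by
  rw [← aux_eLpNorm_sq, ← aux_eLpNorm_sq, aux_plancherel hf hf2]

/-- the polynomial-weighted Schwartz function -/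
def polySchw {n : ℕ} (v : SchwartzMap (Vn n) ℂ) : SchwartzMap (Vn n) ℂ :=
  SchwartzMap.smulLeftCLM ℂ (fun x : Vn n => (1 + (2 * Real.pi) ^ 2 * ‖x‖ ^ 2 : ℝ)) v

lemma polySchw_apply {n : ℕ} (v : SchwartzMap (Vn n) ℂ) (x : Vn n) :
    polySchw v x = (1 + (2 * Real.pi) ^ 2 * ‖x‖ ^ 2 : ℝ) • v x := by
  unfold polySchw
  rw [SchwartzMap.smulLeftCLM_apply_apply]
  have := Function.hasTemperateGrowth_norm_sq (H := Vn n)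
  fun_prop

/-- multiplication by a coordinate -/
def coordSchw {n : ℕ} (j : Fin n) (v : SchwartzMap (Vn n) ℂ) : SchwartzMap (Vn n) ℂ :=
  SchwartzMap.smulLeftCLM ℂ (fun x : Vn n => (EuclideanSpace.proj j : Vn n →L[ℝ] ℝ) x) v

lemma coordSchw_coe {n : ℕ} (j : Fin n) (v : SchwartzMap (Vn n) ℂ) :
    (fun y : Vn n => (y j : ℂ) * v y) = coordSchw j v := by
  unfold coordSchw
  ext x
  rw [SchwartzMap.smulLeftCLM_apply_apply (by fun_prop)]
  simp

lemma aux_memLp_mul {n : ℕ} (v : SchwartzMap (Vn n) ℂ) {m : Vn n → ℝ} (hm : Continuous m)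
    (hm0 : ∀ x, 0 ≤ m x) (hm1 : ∀ x, m x ≤ 1 + (2 * Real.pi * ‖x‖) ^ 2) (p : ℝ≥0∞) :
    MemLp (fun x => (m x : ℂ) * v x) p volume := by
  refine MemLp.mono ((polySchw v).memLp p) ?_ ?_
  · have := v.continuous
    exact (by fun_prop : Continuous fun x => (m x : ℂ) * v x).aestronglyMeasurable
  · refine Filter.Eventually.of_forall fun x => ?_
    rw [polySchw_apply, norm_mul, norm_smul, Complex.norm_real, Real.norm_of_nonneg (hm0 x),
      Real.norm_of_nonneg (by positivity)]
    gcongr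
    calc m x ≤ _ := hm1 x
      _ = _ := by ring

lemma aux_mul_sq {n : ℕ} (v : SchwartzMap (Vn n) ℂ) {m : Vn n → ℝ} (hm : Continuous m)
    (hm0 : ∀ x, 0 ≤ m x) (hm1 : ∀ x, m x ≤ 1 + (2 * Real.pi * ‖x‖) ^ 2) :
    eLpNorm (𝓕⁻ (fun ξ => (m ξ : ℂ) * 𝓕 (fun y => v y) ξ)) 2 volume ^ 2
      = ∫⁻ ξ, ENNReal.ofReal (m ξ ^ 2) * ‖𝓕 v ξ‖ₑ ^ 2 := by
  have h1 := aux_memLp_mul (𝓕 v) hm hm0 hm1 1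
  have h2 := aux_memLp_mul (𝓕 v) hm hm0 hm1 2
  have := aux_plancherel_inv (memLp_one_iff_integrable.mp h1) h2
  have e : (fun ξ => (m ξ : ℂ) * 𝓕 (fun y => v y) ξ) = (fun ξ => (m ξ : ℂ) * (𝓕 v) ξ) := by
    rfl
  rw [e, this, aux_eLpNorm_sq]
  congr 1
  ext ξ
  rw [enorm_mul, mul_pow]
  congr 1
  rw [← ofReal_norm_eq_enorm, Complex.norm_real, Real.norm_of_nonneg (hm0 ξ),
    ENNReal.ofReal_pow (hm0 ξ)]

lemma aux_setLIntegral_const_le {S T : Set ℝ} (hST : S ⊆ T) (hS : MeasurableSet S) (f : ℝ → ℝ≥0∞)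
    (c : ℝ≥0∞) (h : ∀ t ∈ S, c ≤ f t) : c * volume S ≤ ∫⁻ t in T, f t := by
  calc c * volume S = ∫⁻ _ in S, c := by rw [setLIntegral_const]
    _ ≤ ∫⁻ t in S, f t := setLIntegral_mono' hS h
    _ ≤ _ := lintegral_mono_set hST

lemma aux_t_lower (s : ℝ) (hs0 : 0 < s) : ∃ C : ℝ, 0 < C ∧ ∀ a : ℝ,
    ENNReal.ofReal (|a| ^ (2 * s)) ≤ ENNReal.ofReal C * (1 + ∫⁻ t in Set.Ioo (0:ℝ) 1,
      ENNReal.ofReal (t ^ (-1 - 2 * s)) * ENNReal.ofReal ((2 - 2 * Real.cos (t * a)) ^ 2)) := by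
  set c : ℝ := 2 - 2 * Real.cos (1 / 2) with hc
  have hcpos : 0 < c := by
    have : Real.cos (1 / 2) < Real.cos 0 :=
      Real.cos_lt_cos_of_nonneg_of_le_pi le_rfl (by linarith [Real.pi_gt_three]) (by norm_num)
    rw [Real.cos_zero] at this
    linarith
  refine ⟨1 + 2 / c ^ 2, by positivity, fun a => ?_⟩
  rcases le_or_gt |a| 1 with ha | ha
  · calc ENNReal.ofReal (|a| ^ (2 * s)) ≤ ENNReal.ofReal (1 + 2 / c ^ 2) := by
          apply ENNReal.ofReal_le_ofReal
          have := Real.rpow_le_one (abs_nonneg a) ha (by positivity : 0 ≤ 2 * s)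
          have : 0 < 2 / c ^ 2 := by positivity
          linarith
      _ ≤ _ := le_mul_of_one_le_right (by positivity) (by simp)
  · have ha0 : 0 < |a| := by linarith
    have key : ENNReal.ofReal (|a| ^ (1 + 2 * s) * c ^ 2) *
        volume (Set.Ioo (1 / (2 * |a|)) (1 / |a|)) ≤ ∫⁻ t in Set.Ioo (0:ℝ) 1,
      ENNReal.ofReal (t ^ (-1 - 2 * s)) * ENNReal.ofReal ((2 - 2 * Real.cos (t * a)) ^ 2) := by
      apply aux_setLIntegral_const_le _ measurableSet_Ioo
      · intro t ht
        have ht0 : 0 < t := lt_trans (by positivity) ht.1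
        rw [← ENNReal.ofReal_mul (by positivity)]
        apply ENNReal.ofReal_le_ofReal
        have h1 : t * |a| < 1 := by
          have := ht.2
          rwa [lt_div_iff₀ ha0] at this
        have h2 : 1 / 2 < t * |a| := by
          have := ht.1
          rw [div_lt_iff₀ (by positivity)] at this
          linarith
        have h3 : Real.cos (t * a) ≤ Real.cos (1 / 2) := by
          rw [← Real.cos_abs, abs_mul, abs_of_pos ht0]
          exact Real.cos_le_cos_of_nonneg_of_le_pi (by norm_num)
            (by linarith [Real.pi_gt_three]) h2.le
        have h4 : |a| ^ (1 + 2 * s) ≤ t ^ (-1 - 2 * s) := by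
          have : t ^ (-1 - 2 * s) = (1 / t) ^ (1 + 2 * s) := by
            rw [one_div, Real.inv_rpow ht0.le, ← Real.rpow_neg ht0.le]
            congr 1; ring
          rw [this]
          apply Real.rpow_le_rpow ha0.le _ (by positivity)
          rw [le_div_iff₀ ht0]; linarith
        have h5 : c ^ 2 ≤ (2 - 2 * Real.cos (t * a)) ^ 2 := by
          apply pow_le_pow_left₀ hcpos.le; linarith
        exact mul_le_mul h4 h5 (by positivity) (by positivity)
      · intro t ht
        refine ⟨lt_trans (by positivity) ht.1, lt_trans ht.2 ?_⟩
        rw [div_lt_one ha0]; exact ha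
    have hvol : volume (Set.Ioo (1 / (2 * |a|)) (1 / |a|)) = ENNReal.ofReal (1 / (2 * |a|)) := by
      rw [Real.volume_Ioo]
      congr 1
      field_simp; ring
    rw [hvol, ← ENNReal.ofReal_mul (by positivity)] at key
    calc ENNReal.ofReal (|a| ^ (2 * s))
        ≤ ENNReal.ofReal (1 + 2 / c ^ 2) *
            ENNReal.ofReal (|a| ^ (1 + 2 * s) * c ^ 2 * (1 / (2 * |a|))) := by
          rw [← ENNReal.ofReal_mul (by positivity)]
          apply ENNReal.ofReal_le_ofReal
          rw [Real.rpow_add ha0, Real.rpow_one]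
          have : |a| * |a| ^ (2 * s) * c ^ 2 * (1 / (2 * |a|)) = |a| ^ (2 * s) * (c ^ 2 / 2) := by
            field_simp
          rw [this]
          have h0 : 0 ≤ |a| ^ (2 * s) := by positivity
          have : (1 + 2 / c ^ 2) * (|a| ^ (2 * s) * (c ^ 2 / 2))
            = |a| ^ (2 * s) + |a| ^ (2 * s) * (c ^ 2 / 2) := by field_simp; ring
          rw [this]
          have : 0 ≤ |a| ^ (2 * s) * (c ^ 2 / 2) := by positivity
          linarith
      _ ≤ _ := by
          gcongr
          exact key.trans le_add_self

lemma aux_lint_Ioi (p r : ℝ) (hp : p < -1) (hr : 0 < r) :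
    ∫⁻ t in Set.Ioi r, ENNReal.ofReal (t ^ p) = ENNReal.ofReal (r ^ (p + 1) / (-p - 1)) := by
  rw [← ofReal_integral_eq_lintegral_ofReal, integral_Ioi_rpow_of_lt hp hr]
  · congr 1
    have : p + 1 ≠ 0 := by linarith
    have : -p - 1 ≠ 0 := by linarith
    field_simp; ring
  · exact integrableOn_Ioi_rpow_of_lt hp hr
  · filter_upwards [ae_restrict_mem measurableSet_Ioi] with t ht
    have : 0 < t := hr.trans ht
    positivity

lemma aux_lint_Ioc (p r : ℝ) (hp : -1 < p) (hr : 0 ≤ r) :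
    ∫⁻ t in Set.Ioc 0 r, ENNReal.ofReal (t ^ p) = ENNReal.ofReal (r ^ (p + 1) / (p + 1)) := by
  have hi : IntervalIntegrable (fun t : ℝ => t ^ p) volume 0 r :=
    intervalIntegral.intervalIntegrable_rpow' hp
  rw [← ofReal_integral_eq_lintegral_ofReal, ← intervalIntegral.integral_of_le hr,
    integral_rpow (Or.inl hp)]
  · rw [Real.zero_rpow (by linarith), sub_zero]
  · rwa [intervalIntegrable_iff_integrableOn_Ioc_of_le hr] at hi
  · filter_upwards [ae_restrict_mem measurableSet_Ioc] with t ht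
    have : 0 < t := ht.1
    positivity

lemma aux_t_upper (k : ℝ) (hk1 : 0 < k) (hk2 : k < 2) : ∃ C : ℝ, 0 < C ∧ ∀ a : ℝ,
    ∫⁻ t in Set.Ioo (0:ℝ) 1,
      ENNReal.ofReal (t ^ (-1 - 2 * k)) * ENNReal.ofReal ((2 - 2 * Real.cos (t * a)) ^ 2)
      ≤ ENNReal.ofReal (C * |a| ^ (2 * k)) := by
  refine ⟨1 / (4 - 2 * k) + 16 / (2 * k), ?_, fun a => ?_⟩
  · have : 0 < 4 - 2 * k := by linarith
    positivity
  rcases eq_or_ne a 0 with rfl | ha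
  · simp
  have ha0 : 0 < |a| := abs_pos.mpr ha
  have hr : 0 < 1 / |a| := by positivity
  calc _ ≤ ∫⁻ t in Set.Ioc 0 (1 / |a|) ∪ Set.Ioi (1 / |a|),
      ENNReal.ofReal (t ^ (-1 - 2 * k)) * ENNReal.ofReal ((2 - 2 * Real.cos (t * a)) ^ 2) := by
        apply lintegral_mono_set
        rw [Set.Ioc_union_Ioi_eq_Ioi hr.le]
        exact fun t ht => ht.1
    _ ≤ _ := lintegral_union_le _ _ _
    _ ≤ ENNReal.ofReal (|a| ^ 4) * ENNReal.ofReal ((1 / |a|) ^ (3 - 2 * k + 1) / (3 - 2 * k + 1))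
        + ENNReal.ofReal 16 *
          ENNReal.ofReal ((1 / |a|) ^ (-1 - 2 * k + 1) / (-(-1 - 2 * k) - 1)) := by
        rw [← aux_lint_Ioc (3 - 2 * k) _ (by linarith) hr.le,
          ← aux_lint_Ioi (-1 - 2 * k) _ (by linarith) hr,
          ← lintegral_const_mul' _ _ ENNReal.ofReal_ne_top,
          ← lintegral_const_mul' _ _ ENNReal.ofReal_ne_top]
        apply add_le_add
        · apply setLIntegral_mono' measurableSet_Ioc
          intro t ht
          have ht0 : 0 < t := ht.1
          rw [← ENNReal.ofReal_mul (by positivity), ← ENNReal.ofReal_mul (by positivity)]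
          apply ENNReal.ofReal_le_ofReal
          have h1 := Real.one_sub_sq_div_two_le_cos (x := t * a)
          have h2 := Real.cos_le_one (t * a)
          have h3 : (2 - 2 * Real.cos (t * a)) ^ 2 ≤ ((t * a) ^ 2) ^ 2 := by
            apply pow_le_pow_left₀ <;> linarith
          have h4 : t ^ (3 - 2 * k) = t ^ (-1 - 2 * k) * t ^ 4 := by
            rw [← Real.rpow_natCast t 4, ← Real.rpow_add ht0]; congr 1; push_cast; ring
          calc _ ≤ t ^ (-1 - 2 * k) * ((t * a) ^ 2) ^ 2 := by gcongr
            _ = _ := by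
              rw [h4]
              have : |a| ^ 4 = a ^ 4 := by
                rw [show (4:ℕ) = 2 * 2 from rfl, pow_mul, sq_abs, pow_mul]
              rw [this]; ring
        · apply setLIntegral_mono' measurableSet_Ioi
          intro t ht
          have ht0 : 0 < t := hr.trans ht
          rw [mul_comm]
          gcongr
          have h1 := Real.neg_one_le_cos (t * a)
          have h2 := Real.cos_le_one (t * a)
          nlinarith
    _ = _ := by
        have e1 : (1 / |a|) ^ (3 - 2 * k + 1) = |a| ^ (2 * k) / |a| ^ 4 := by
          rw [one_div, Real.inv_rpow ha0.le, ← Real.rpow_neg ha0.le, ← Real.rpow_natCast _ 4,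
            ← Real.rpow_sub ha0]
          congr 1; push_cast; ring
        have e2 : (1 / |a|) ^ (-1 - 2 * k + 1) = |a| ^ (2 * k) := by
          rw [one_div, Real.inv_rpow ha0.le, ← Real.rpow_neg ha0.le]
          congr 1; ring
        have h4 : 0 < 4 - 2 * k := by linarith
        have e3 : 3 - 2 * k + 1 = 4 - 2 * k := by ring
        have e4 : (-(-1 - 2 * k) - 1) = 2 * k := by ring
        rw [e1, e2, e4, e3, ← ENNReal.ofReal_mul (by positivity),
          ← ENNReal.ofReal_mul (by positivity), ← ENNReal.ofReal_add (by positivity) (by positivity)]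
        congr 1
        field_simp

lemma aux_t_tail (s : ℝ) (hs : 0 < s) (r : ℝ) (hr : 0 ≤ r) :
    ∫⁻ t in Set.Ioo (0:ℝ) 1,
      ENNReal.ofReal (t ^ (-1 - 2 * s)) * (if 1 < t * r then 1 else 0)
      ≤ ENNReal.ofReal (1 / (2 * s) * r ^ (2 * s)) := by
  rcases hr.eq_or_lt with rfl | hr
  · have h : ¬ ((1:ℝ) < 0) := by norm_num
    simp [h]
  calc _ ≤ ∫⁻ t in Set.Ioo (0:ℝ) 1,
        (Set.Ioi (1 / r)).indicator (fun t => ENNReal.ofReal (t ^ (-1 - 2 * s))) t := by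
        apply lintegral_mono
        intro t
        by_cases h : 1 < t * r
        · have : t ∈ Set.Ioi (1 / r) := by
            rw [Set.mem_Ioi, div_lt_iff₀ hr]; exact h
          rw [Set.indicator_of_mem this]
          simp [h]
        · simp [h]
    _ ≤ ∫⁻ t, (Set.Ioi (1 / r)).indicator (fun t => ENNReal.ofReal (t ^ (-1 - 2 * s))) t :=
        setLIntegral_le_lintegral _ _
    _ = _ := by
        rw [lintegral_indicator measurableSet_Ioi, aux_lint_Ioi _ _ (by linarith) (by positivity)]
        congr 1
        rw [one_div r, Real.inv_rpow hr.le, ← Real.rpow_neg hr.le]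
        have : -(-1 - 2 * s + 1) = 2 * s := by ring
        rw [this]
        have : (-(-1 - 2 * s) - 1) = 2 * s := by ring
        rw [this]; ring

lemma aux_t_fin (s : ℝ) (hs : s < 1) :
    ∫⁻ t in Set.Ioo (0:ℝ) 1, ENNReal.ofReal (t ^ (1 - 2 * s))
      ≤ ENNReal.ofReal (1 / (2 - 2 * s)) := by
  calc _ ≤ ∫⁻ t in Set.Ioc (0:ℝ) 1, ENNReal.ofReal (t ^ (1 - 2 * s)) :=
        lintegral_mono_set Set.Ioo_subset_Ioc_self
    _ = _ := by
      rw [aux_lint_Ioc _ _ (by linarith) zero_le_one]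
      congr 1
      rw [Real.one_rpow]; congr 1; ring

lemma aux_norm_le_sum {n : ℕ} (s : ℝ) (hs0 : 0 ≤ s) (hs1 : s ≤ 1) (hn : 1 ≤ n) (ξ : Vn n) :
    (2 * Real.pi * ‖ξ‖) ^ (2 * s) ≤ n * ∑ i, |2 * Real.pi * ξ i| ^ (2 * s) := by
  have : Nonempty (Fin n) := ⟨⟨0, hn⟩⟩
  obtain ⟨i, -, hi⟩ := Finset.exists_max_image (Finset.univ : Finset (Fin n)) (fun i => |ξ i|)
    Finset.univ_nonempty
  have hn' : (1:ℝ) ≤ n := by exact_mod_cast hn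
  have h1 : ‖ξ‖ ^ 2 ≤ n * |ξ i| ^ 2 := by
    rw [EuclideanSpace.norm_sq_eq]
    calc _ ≤ ∑ _j : Fin n, |ξ i| ^ 2 := by
          apply Finset.sum_le_sum
          intro j hj
          rw [Real.norm_eq_abs]
          exact pow_le_pow_left₀ (abs_nonneg _) (hi j hj) 2
      _ = _ := by simp
  have e : ∀ x : ℝ, 0 ≤ x → x ^ (2 * s) = (x ^ 2) ^ s := by
    intro x hx
    rw [Real.rpow_mul hx]; norm_num
  calc (2 * Real.pi * ‖ξ‖) ^ (2 * s) = ((2 * Real.pi) ^ 2 * ‖ξ‖ ^ 2) ^ s := by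
        rw [e _ (by positivity), mul_pow]
    _ ≤ ((n:ℝ) * |2 * Real.pi * ξ i| ^ 2) ^ s := by
        apply Real.rpow_le_rpow (by positivity) _ hs0
        rw [abs_mul, abs_of_pos (by positivity : 0 < 2 * Real.pi), mul_pow]
        have : 0 ≤ (2 * Real.pi) ^ 2 := by positivity
        nlinarith
    _ = (n:ℝ) ^ s * |2 * Real.pi * ξ i| ^ (2 * s) := by
        rw [Real.mul_rpow (by positivity) (by positivity), ← e _ (abs_nonneg _)]
    _ ≤ n * |2 * Real.pi * ξ i| ^ (2 * s) := by
        gcongr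
        calc (n:ℝ) ^ s ≤ (n:ℝ) ^ (1:ℝ) := Real.rpow_le_rpow_of_exponent_le hn' hs1
          _ = n := Real.rpow_one _
    _ ≤ _ := by
        gcongr
        exact Finset.single_le_sum (f := fun i => |2 * Real.pi * ξ i| ^ (2 * s))
          (fun j _ => by positivity) (Finset.mem_univ i)

/-- second difference -/
def ddiff {n : ℕ} (h : Vn n) (v : SchwartzMap (Vn n) ℂ) : SchwartzMap (Vn n) ℂ :=
  SchwartzMap.compSubConstCLM ℂ (-h) v + SchwartzMap.compSubConstCLM ℂ h v - (2:ℂ) • v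

lemma ddiff_apply {n : ℕ} (h : Vn n) (v : SchwartzMap (Vn n) ℂ) (x : Vn n) :
    ddiff h v x = v (x + h) + v (x - h) - 2 * v x := by
  simp [ddiff, SchwartzMap.compSubConstCLM_apply]

lemma aux_fourier_shift {n : ℕ} (h : Vn n) (v : SchwartzMap (Vn n) ℂ) (ξ : Vn n) :
    𝓕 (SchwartzMap.compSubConstCLM ℂ h v) ξ
      = Complex.exp (-(2 * Real.pi * inner ℝ h ξ : ℝ) * Complex.I) * 𝓕 v ξ := by
  have h1 := congrFun (VectorFourier.fourierIntegral_comp_add_right Real.fourierChar volume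
    (innerₗ (Vn n)) (v : Vn n → ℂ) (-h)) ξ
  have h2 : 𝓕 (SchwartzMap.compSubConstCLM ℂ h v) ξ =
    VectorFourier.fourierIntegral Real.fourierChar volume
    (innerₗ (Vn n)) ((v : Vn n → ℂ) ∘ fun x => x + -h) ξ := by
    change VectorFourier.fourierIntegral Real.fourierChar volume
      (innerₗ (Vn n)) (SchwartzMap.compSubConstCLM ℂ h v) ξ = _
    congr 1
  rw [h2, h1]
  change Real.fourierChar _ • 𝓕 v ξ = _
  rw [Circle.smul_def, Real.fourierChar_apply, smul_eq_mul]
  congr 2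
  simp

lemma aux_fourier_ddiff {n : ℕ} (h : Vn n) (v : SchwartzMap (Vn n) ℂ) (ξ : Vn n) :
    𝓕 (ddiff h v) ξ = ((2 * Real.cos (2 * Real.pi * inner ℝ h ξ) - 2 : ℝ) : ℂ) * 𝓕 v ξ := by
  have h1 : 𝓕 (ddiff h v) = 𝓕 (SchwartzMap.compSubConstCLM ℂ (-h) v)
      + 𝓕 (SchwartzMap.compSubConstCLM ℂ h v) - (2:ℂ) • 𝓕 v := by
    simp only [ddiff, ← FourierTransform.fourierCLM_apply (R := ℂ), map_add, map_sub, map_smul]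
  rw [h1]
  simp only [add_apply, sub_apply, smul_apply,
    aux_fourier_shift, inner_neg_left, smul_eq_mul]
  push_cast
  rw [Complex.two_cos]
  simp only [mul_neg, neg_neg, neg_mul]
  ring

lemma aux_enorm_sq (z : ℂ) : ‖z‖ₑ ^ 2 = ENNReal.ofReal (‖z‖ ^ 2) := by
  rw [← ofReal_norm, ENNReal.ofReal_pow (norm_nonneg _)]

lemma aux_ddiff_lint {n : ℕ} (i : Fin n) (t : ℝ) (v : SchwartzMap (Vn n) ℂ) :
    ∫⁻ ξ : Vn n, ENNReal.ofReal ((2 - 2 * Real.cos (t * (2 * Real.pi * ξ i))) ^ 2) * ‖𝓕 v ξ‖ₑ ^ 2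
      = ∫⁻ x, ‖ddiff (EuclideanSpace.single i t) v x‖ₑ ^ 2 := by
  rw [← aux_planch_lint (ddiff (EuclideanSpace.single i t) v).integrable
    ((ddiff (EuclideanSpace.single i t) v).memLp 2)]
  congr 1
  ext ξ
  rw [← SchwartzMap.fourier_coe, aux_fourier_ddiff, enorm_mul, mul_pow]
  congr 1
  rw [aux_enorm_sq, Complex.norm_real, Real.norm_eq_abs, sq_abs]
  congr 1
  rw [EuclideanSpace.inner_single_left]
  simp only [conj_trivial]
  rw [show 2 * Real.pi * (t * ξ i) = t * (2 * Real.pi * ξ i) by ring]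
  ring

lemma aux_tonelli {n : ℕ} {φ : ℝ → ℝ≥0∞} (hφ : Measurable φ) {w : ℝ → Vn n → ℝ≥0∞}
    (hw : Measurable (Function.uncurry w)) {G : Vn n → ℝ≥0∞} (hG : Measurable G) :
    ∫⁻ t in Set.Ioo (0:ℝ) 1, φ t * ∫⁻ x, w t x * G x
      = ∫⁻ x, (∫⁻ t in Set.Ioo (0:ℝ) 1, φ t * w t x) * G x := by
  have hw1 : ∀ t, Measurable (w t) := fun t => hw.comp (measurable_const.prodMk measurable_id)
  have hw2 : ∀ x, Measurable (fun t => w t x) :=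
    fun x => hw.comp (measurable_id.prodMk measurable_const)
  calc _ = ∫⁻ t in Set.Ioo (0:ℝ) 1, ∫⁻ x, φ t * (w t x * G x) := by
        congr 1; ext t
        exact (lintegral_const_mul _ ((hw1 t).mul hG)).symm
    _ = ∫⁻ x, ∫⁻ t in Set.Ioo (0:ℝ) 1, φ t * (w t x * G x) := by
        apply lintegral_lintegral_swap
        apply Measurable.aemeasurable
        exact (hφ.comp measurable_fst).mul (hw.mul (hG.comp measurable_snd))
    _ = _ := by
        congr 1; ext x
        refine Eq.trans ?_ (lintegral_mul_const _ (hφ.mul (hw2 x)))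
        congr 1; ext t
        ring

/-- tail of `|y|²|v|²` -/
def tailF {n : ℕ} (t : ℝ) (v : SchwartzMap (Vn n) ℂ) (y : Vn n) : ℝ :=
  (if 1 < t * ‖y‖ then 1 else 0) * (‖y‖ ^ 2 * ‖v y‖ ^ 2)

lemma tailF_nonneg {n : ℕ} (t : ℝ) (v : SchwartzMap (Vn n) ℂ) (y : Vn n) : 0 ≤ tailF t v y := by
  unfold tailF; split_ifs <;> positivity

lemma tailF_meas {n : ℕ} (t : ℝ) (v : SchwartzMap (Vn n) ℂ) : Measurable (tailF t v) := by
  unfold tailF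
  have := v.continuous
  apply Measurable.mul
  · refine Measurable.ite ?_ measurable_const measurable_const
    exact measurableSet_lt measurable_const (by fun_prop)
  · fun_prop

lemma aux_pointwise {n : ℕ} (i j : Fin n) (t : ℝ) (ht0 : 0 < t) (ht1 : t < 1)
    (v : SchwartzMap (Vn n) ℂ) (x : Vn n) :
    ‖ddiff (EuclideanSpace.single i t) (coordSchw j v) x‖ ^ 2 ≤
      8 * t ^ (-2:ℝ) * ‖ddiff (EuclideanSpace.single i t) v x‖ ^ 2
      + 24 * (tailF t v (x + EuclideanSpace.single i t) + tailF t v (x - EuclideanSpace.single i t)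
          + tailF t v x)
      + 4 * t ^ 2 * (‖v (x + EuclideanSpace.single i t)‖ ^ 2
          + ‖v (x - EuclideanSpace.single i t)‖ ^ 2) := by
  set h : Vn n := EuclideanSpace.single i t with hh
  have hnorm : ‖h‖ = t := by
    rw [hh, EuclideanSpace.norm_single, Real.norm_of_nonneg ht0.le]
  have hj : |h j| ≤ t := by
    rw [← hnorm, ← Real.norm_eq_abs]; exact PiLp.norm_apply_le h j
  have e : ddiff h (coordSchw j v) x
      = (x j : ℂ) * ddiff h v x + (h j : ℂ) * (v (x + h) - v (x - h)) := by
    rw [ddiff_apply, ddiff_apply, ← coordSchw_coe]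
    simp only [PiLp.add_apply, PiLp.sub_apply]
    push_cast; ring
  have hxj : |x j| ≤ ‖x‖ := by
    rw [← Real.norm_eq_abs]; exact PiLp.norm_apply_le x j
  have n1 : ‖ddiff h (coordSchw j v) x‖ ≤
      ‖x‖ * ‖ddiff h v x‖ + t * (‖v (x + h)‖ + ‖v (x - h)‖) := by
    rw [e]
    refine (norm_add_le _ _).trans ?_
    rw [norm_mul, norm_mul, Complex.norm_real, Complex.norm_real, Real.norm_eq_abs,
      Real.norm_eq_abs]
    gcongr
    exact norm_sub_le _ _
  have n2 : ‖ddiff h v x‖ ≤ ‖v (x + h)‖ + ‖v (x - h)‖ + 2 * ‖v x‖ := by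
    rw [ddiff_apply]
    refine (norm_sub_le _ _).trans ?_
    rw [norm_mul]
    have := norm_add_le (v (x + h)) (v (x - h))
    simp only [Complex.norm_ofNat]
    linarith
  have T1 := tailF_nonneg t v (x + h)
  have T2 := tailF_nonneg t v (x - h)
  have T3 := tailF_nonneg t v x
  have main : ‖x‖ ^ 2 * ‖ddiff h v x‖ ^ 2 ≤ 4 * t ^ (-2:ℝ) * ‖ddiff h v x‖ ^ 2
      + 12 * (tailF t v (x + h) + tailF t v (x - h) + tailF t v x) := by
    have ht2 : t ^ (-2:ℝ) = (t ^ 2)⁻¹ := by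
      rw [Real.rpow_neg ht0.le]; norm_num
    rcases le_or_gt (t * ‖x‖) 2 with hx | hx
    · have : ‖x‖ ^ 2 ≤ 4 * t ^ (-2:ℝ) := by
        rw [ht2, ← div_eq_mul_inv, le_div_iff₀ (by positivity)]
        have : (t * ‖x‖) ^ 2 ≤ 2 ^ 2 := pow_le_pow_left₀ (by positivity) hx 2
        nlinarith
      have := mul_le_mul_of_nonneg_right this (sq_nonneg ‖ddiff h v x‖)
      linarith
    · have hx2 : 2 < ‖x‖ := by
        by_contra hcon
        push Not at hcon
        have := norm_nonneg x
        nlinarith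
      have y1 : ∀ y : Vn n, ‖x‖ ≤ ‖y‖ + t → ‖x‖ ^ 2 * ‖v y‖ ^ 2 ≤ 4 * tailF t v y := by
        intro y hy
        have hxy : ‖x‖ ≤ 2 * ‖y‖ := by linarith
        have : 1 < t * ‖y‖ := by nlinarith
        unfold tailF
        rw [if_pos this]
        have : ‖x‖ ^ 2 ≤ (2 * ‖y‖) ^ 2 := pow_le_pow_left₀ (by positivity) hxy 2
        nlinarith [mul_le_mul_of_nonneg_right this (sq_nonneg ‖v y‖)]
      have a1 := y1 (x + h) (by
        have := norm_sub_le (x + h) h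
        rw [add_sub_cancel_right, hnorm] at this
        exact this)
      have a2 := y1 (x - h) (by
        have := norm_add_le (x - h) h
        rw [sub_add_cancel, hnorm] at this
        exact this)
      have a3 : ‖x‖ ^ 2 * ‖v x‖ ^ 2 = tailF t v x := by
        unfold tailF
        rw [if_pos (by linarith)]; ring
      have b : ‖ddiff h v x‖ ^ 2 ≤
          3 * (‖v (x + h)‖ ^ 2 + ‖v (x - h)‖ ^ 2 + 4 * ‖v x‖ ^ 2) := by
        have := pow_le_pow_left₀ (norm_nonneg _) n2 2
        nlinarith [sq_nonneg (‖v (x + h)‖ - ‖v (x - h)‖), sq_nonneg (‖v (x + h)‖ - 2 * ‖v x‖),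
          sq_nonneg (‖v (x - h)‖ - 2 * ‖v x‖)]
      have b2 := mul_le_mul_of_nonneg_left b (sq_nonneg ‖x‖)
      have : 0 ≤ 4 * t ^ (-2:ℝ) * ‖ddiff h v x‖ ^ 2 := by positivity
      nlinarith
  have sq1 := pow_le_pow_left₀ (norm_nonneg _) n1 2
  have sq2 : (‖x‖ * ‖ddiff h v x‖ + t * (‖v (x + h)‖ + ‖v (x - h)‖)) ^ 2 ≤
      2 * (‖x‖ ^ 2 * ‖ddiff h v x‖ ^ 2)
       + 4 * t ^ 2 * (‖v (x + h)‖ ^ 2 + ‖v (x - h)‖ ^ 2) := by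
    have A : ∀ p q : ℝ, (p + q) ^ 2 ≤ 2 * p ^ 2 + 2 * q ^ 2 := fun p q => by
      nlinarith [sq_nonneg (p - q)]
    have B1 := A (‖x‖ * ‖ddiff h v x‖) (t * (‖v (x + h)‖ + ‖v (x - h)‖))
    have B2 := mul_le_mul_of_nonneg_left (A ‖v (x + h)‖ ‖v (x - h)‖) (sq_nonneg t)
    nlinarith
  linarith

lemma aux_It {n : ℕ} (i j : Fin n) (t : ℝ) (ht0 : 0 < t) (ht1 : t < 1)
    (v : SchwartzMap (Vn n) ℂ) :
    ∫⁻ x, ‖ddiff (EuclideanSpace.single i t) (coordSchw j v) x‖ₑ ^ 2 ≤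
      ENNReal.ofReal (8 * t ^ (-2:ℝ)) * (∫⁻ x, ‖ddiff (EuclideanSpace.single i t) v x‖ₑ ^ 2)
      + 72 * (∫⁻ y, ENNReal.ofReal (tailF t v y))
      + ENNReal.ofReal (8 * t ^ 2) * ∫⁻ y, ‖v y‖ₑ ^ 2 := by
  set h : Vn n := EuclideanSpace.single i t with hh
  have hvc := v.continuous
  have hdc := (ddiff h v).continuous
  have mT : Measurable fun y => ENNReal.ofReal (tailF t v y) := (tailF_meas t v).ennreal_ofReal
  have mT1 : Measurable fun y => ENNReal.ofReal (tailF t v (y + h)) :=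
    mT.comp (measurable_add_const h)
  have mT2 : Measurable fun y => ENNReal.ofReal (tailF t v (y - h)) :=
    mT.comp (measurable_sub_const h)
  have mv : Measurable fun y => ‖v y‖ₑ ^ 2 := by fun_prop
  have mv1 : Measurable fun y => ‖v (y + h)‖ₑ ^ 2 := mv.comp (measurable_add_const h)
  have mv2 : Measurable fun y => ‖v (y - h)‖ₑ ^ 2 := mv.comp (measurable_sub_const h)
  have md : Measurable fun y => ‖ddiff h v y‖ₑ ^ 2 := by fun_prop
  calc _ ≤ ∫⁻ x, (ENNReal.ofReal (8 * t ^ (-2:ℝ)) * ‖ddiff h v x‖ₑ ^ 2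
        + 24 * (ENNReal.ofReal (tailF t v (x + h)) + ENNReal.ofReal (tailF t v (x - h))
            + ENNReal.ofReal (tailF t v x))
        + ENNReal.ofReal (4 * t ^ 2) * (‖v (x + h)‖ₑ ^ 2 + ‖v (x - h)‖ₑ ^ 2)) := by
        apply lintegral_mono
        intro x
        have := ENNReal.ofReal_le_ofReal (aux_pointwise i j t ht0 ht1 v x)
        rw [← hh] at this
        have T1 := tailF_nonneg t v (x + h)
        have T2 := tailF_nonneg t v (x - h)
        have T3 := tailF_nonneg t v x
        rw [ENNReal.ofReal_add (by positivity) (by positivity),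
          ENNReal.ofReal_add (by positivity) (by positivity),
          ENNReal.ofReal_mul (by positivity : 0 ≤ 8 * t ^ (-2:ℝ)),
          ENNReal.ofReal_mul (by positivity : 0 ≤ 4 * t ^ 2),
          ENNReal.ofReal_mul (by positivity : (0:ℝ) ≤ 24),
          ENNReal.ofReal_add (by positivity) (by positivity),
          ENNReal.ofReal_add (by positivity) (by positivity),
          ENNReal.ofReal_add (by positivity) (by positivity),
          ← aux_enorm_sq, ← aux_enorm_sq, ← aux_enorm_sq, ← aux_enorm_sq,
          ENNReal.ofReal_ofNat] at this
        exact this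
    _ = ENNReal.ofReal (8 * t ^ (-2:ℝ)) * (∫⁻ x, ‖ddiff h v x‖ₑ ^ 2)
        + 24 * ((∫⁻ x, ENNReal.ofReal (tailF t v (x + h))) + (∫⁻ x, ENNReal.ofReal (tailF t v (x - h)))
            + ∫⁻ x, ENNReal.ofReal (tailF t v x))
        + ENNReal.ofReal (4 * t ^ 2) * ((∫⁻ x, ‖v (x + h)‖ₑ ^ 2) + ∫⁻ x, ‖v (x - h)‖ₑ ^ 2) := by
        rw [lintegral_add_left (by fun_prop), lintegral_add_left (by fun_prop),
          lintegral_const_mul _ md, lintegral_const_mul _ (by fun_prop),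
          lintegral_const_mul _ (by fun_prop), lintegral_add_left (by fun_prop),
          lintegral_add_left mT1, lintegral_add_left mv1]
    _ = _ := by
        rw [lintegral_add_right_eq_self (fun x => ENNReal.ofReal (tailF t v x)) h,
          lintegral_sub_right_eq_self (fun x => ENNReal.ofReal (tailF t v x)) h,
          lintegral_add_right_eq_self (fun x => ‖v x‖ₑ ^ 2) h,
          lintegral_sub_right_eq_self (fun x => ‖v x‖ₑ ^ 2) h]
        have e8 : ENNReal.ofReal (8 * t ^ 2) = 2 * ENNReal.ofReal (4 * t ^ 2) := by
          rw [← ENNReal.ofReal_ofNat 2, ← ENNReal.ofReal_mul (by norm_num)]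
          congr 1; ring
        rw [e8]
        ring

/-- `∫ |2πξ|^{2ℓ}|f̂|²` -/
def BQ (n : ℕ) (ℓ : ℝ) (v : SchwartzMap (Vn n) ℂ) : ℝ≥0∞ :=
  ∫⁻ ξ : Vn n, ENNReal.ofReal ((2 * Real.pi * ‖ξ‖) ^ (2 * ℓ)) * ‖𝓕 v ξ‖ₑ ^ 2

/-- `∫ |x|^{2ℓ}|f|²` -/
def DQ (n : ℕ) (ℓ : ℝ) (v : SchwartzMap (Vn n) ℂ) : ℝ≥0∞ :=
  ∫⁻ x : Vn n, ENNReal.ofReal (‖x‖ ^ (2 * ℓ)) * ‖v x‖ₑ ^ 2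

/-- `∫ |f|²` -/
def NQ (n : ℕ) (v : SchwartzMap (Vn n) ℂ) : ℝ≥0∞ := ∫⁻ x : Vn n, ‖v x‖ₑ ^ 2

lemma aux_coord_sq {n : ℕ} (k : ℝ) (hk1 : 1 < k) (j : Fin n) (v : SchwartzMap (Vn n) ℂ) :
    ∫⁻ x, ‖coordSchw j v x‖ₑ ^ 2 ≤ DQ n k v + NQ n v := by
  have hvc := v.continuous
  unfold DQ NQ
  rw [← lintegral_add_right _ (by fun_prop)]
  apply lintegral_mono
  intro x
  simp only
  rw [← coordSchw_coe, enorm_mul, mul_pow]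
  nth_rewrite 3 [← one_mul (‖v x‖ₑ ^ 2)]
  rw [← add_mul]
  gcongr
  rw [aux_enorm_sq, Complex.norm_real, ← ENNReal.ofReal_one, ← ENNReal.ofReal_add (by positivity)
    (by norm_num)]
  apply ENNReal.ofReal_le_ofReal
  have h1 : ‖x j‖ ^ 2 ≤ ‖x‖ ^ 2 := pow_le_pow_left₀ (norm_nonneg _) (PiLp.norm_apply_le x j) 2
  rcases le_or_gt ‖x‖ 1 with h | h
  · have : ‖x‖ ^ 2 ≤ 1 := pow_le_one₀ (norm_nonneg _) h
    have : 0 ≤ ‖x‖ ^ (2 * k) := by positivity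
    linarith
  · have : ‖x‖ ^ (2:ℝ) ≤ ‖x‖ ^ (2 * k) := Real.rpow_le_rpow_of_exponent_le h.le (by linarith)
    rw [Real.rpow_two] at this
    linarith

lemma aux_key_i (k : ℝ) (hk1 : 1 < k) (hk2 : k < 2) : ∃ C : ℝ, 0 < C ∧
    ∀ (n : ℕ) (i j : Fin n) (v : SchwartzMap (Vn n) ℂ),
    ∫⁻ ξ : Vn n, ENNReal.ofReal (|2 * Real.pi * ξ i| ^ (2 * (k - 1))) * ‖𝓕 (coordSchw j v) ξ‖ₑ ^ 2
      ≤ ENNReal.ofReal C * (BQ n k v + DQ n k v + NQ n v) := by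
  obtain ⟨C1, hC1, h1⟩ := aux_t_lower (k - 1) (by linarith)
  obtain ⟨C2, hC2, h2⟩ := aux_t_upper k (by linarith) hk2
  have hs : 0 < k - 1 := by linarith
  have hs2 : 0 < 2 - 2 * (k - 1) := by linarith
  refine ⟨C1 * (1 + 8 * C2 + 72 * (1 / (2 * (k - 1))) + 8 * (1 / (2 - 2 * (k - 1)))),
    by positivity, fun n i j v => ?_⟩
  have hvc := v.continuous
  have hgc := (coordSchw j v).continuous
  have hfvc : Continuous ⇑(𝓕 v : SchwartzMap (Vn n) ℂ) := (𝓕 v).continuous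
  have hfgc : Continuous ⇑(𝓕 (coordSchw j v) : SchwartzMap (Vn n) ℂ) := (𝓕 (coordSchw j v)).continuous
  have mp : ∀ p : ℝ, Measurable fun t : ℝ => ENNReal.ofReal (t ^ p) := fun p =>
    (measurable_id.pow_const p).ennreal_ofReal
  have mw : Measurable (Function.uncurry fun (t : ℝ) (ξ : Vn n) =>
      ENNReal.ofReal ((2 - 2 * Real.cos (t * (2 * Real.pi * ξ i))) ^ 2)) := by
    apply Measurable.ennreal_ofReal
    apply Continuous.measurable
    fun_prop
  -- the three pieces
  have p1 : ∫⁻ t in Set.Ioo (0:ℝ) 1, ENNReal.ofReal (t ^ (-1 - 2 * (k - 1))) *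
      (ENNReal.ofReal (8 * t ^ (-2:ℝ)) * ∫⁻ x, ‖ddiff (EuclideanSpace.single i t) v x‖ₑ ^ 2)
      ≤ ENNReal.ofReal (8 * C2) * BQ n k v := by
    calc _ = ∫⁻ t in Set.Ioo (0:ℝ) 1, ENNReal.ofReal 8 * (ENNReal.ofReal (t ^ (-1 - 2 * k)) *
          ∫⁻ ξ : Vn n, ENNReal.ofReal ((2 - 2 * Real.cos (t * (2 * Real.pi * ξ i))) ^ 2) *
            ‖𝓕 v ξ‖ₑ ^ 2) := by
          apply setLIntegral_congr_fun measurableSet_Ioo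
          intro t ht
          have ht0 : 0 < t := ht.1
          simp only
          rw [aux_ddiff_lint, ← mul_assoc, ← mul_assoc, ← ENNReal.ofReal_mul (by positivity),
            ← ENNReal.ofReal_mul (by positivity)]
          congr 2
          rw [show (-1 - 2 * k) = (-1 - 2 * (k - 1)) + (-2) by ring, Real.rpow_add ht0]
          ring
      _ = ENNReal.ofReal 8 * ∫⁻ ξ : Vn n, (∫⁻ t in Set.Ioo (0:ℝ) 1,
          ENNReal.ofReal (t ^ (-1 - 2 * k)) *
          ENNReal.ofReal ((2 - 2 * Real.cos (t * (2 * Real.pi * ξ i))) ^ 2)) * ‖𝓕 v ξ‖ₑ ^ 2 := by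
          rw [lintegral_const_mul' _ _ ENNReal.ofReal_ne_top, aux_tonelli (mp _) mw (by fun_prop)]
      _ ≤ ENNReal.ofReal 8 * ∫⁻ ξ : Vn n, ENNReal.ofReal C2 *
          (ENNReal.ofReal ((2 * Real.pi * ‖ξ‖) ^ (2 * k)) * ‖𝓕 v ξ‖ₑ ^ 2) := by
          refine mul_le_mul_right (lintegral_mono fun ξ => ?_) _
          simp only
          rw [← mul_assoc]
          refine mul_le_mul_left ?_ _
          refine (h2 _).trans ?_
          rw [← ENNReal.ofReal_mul hC2.le]
          apply ENNReal.ofReal_le_ofReal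
          gcongr
          rw [abs_mul, abs_of_pos (by positivity : 0 < 2 * Real.pi)]
          gcongr
          exact PiLp.norm_apply_le ξ i
      _ = _ := by
          rw [lintegral_const_mul' _ _ ENNReal.ofReal_ne_top, ← mul_assoc,
            ← ENNReal.ofReal_mul (by norm_num)]
          rfl
  have p2 : ∫⁻ t in Set.Ioo (0:ℝ) 1, ENNReal.ofReal (t ^ (-1 - 2 * (k - 1))) *
      (72 * ∫⁻ y, ENNReal.ofReal (tailF t v y))
      ≤ ENNReal.ofReal (72 * (1 / (2 * (k - 1)))) * DQ n k v := by
    calc _ = 72 * ∫⁻ t in Set.Ioo (0:ℝ) 1, (ENNReal.ofReal (t ^ (-1 - 2 * (k - 1))) *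
          ∫⁻ y : Vn n, (if 1 < t * ‖y‖ then 1 else 0) * (ENNReal.ofReal (‖y‖ ^ 2) * ‖v y‖ₑ ^ 2)) := by
          rw [← lintegral_const_mul' _ _ (by norm_num)]
          congr 1; ext t
          rw [← mul_assoc, ← mul_assoc, mul_comm (72:ℝ≥0∞)]
          congr 2; ext y
          unfold tailF
          rw [aux_enorm_sq, ← ENNReal.ofReal_mul (by positivity)]
          split_ifs <;> simp
      _ = 72 * ∫⁻ y : Vn n, (∫⁻ t in Set.Ioo (0:ℝ) 1, ENNReal.ofReal (t ^ (-1 - 2 * (k - 1))) *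
          (if 1 < t * ‖y‖ then 1 else 0)) * (ENNReal.ofReal (‖y‖ ^ 2) * ‖v y‖ₑ ^ 2) := by
          rw [aux_tonelli (mp _) _ (by fun_prop)]
          unfold Function.uncurry
          refine Measurable.ite ?_ measurable_const measurable_const
          exact measurableSet_lt measurable_const (by fun_prop)
      _ ≤ 72 * ∫⁻ y : Vn n, ENNReal.ofReal (1 / (2 * (k - 1))) *
          (ENNReal.ofReal (‖y‖ ^ (2 * k)) * ‖v y‖ₑ ^ 2) := by
          refine mul_le_mul_right (lintegral_mono fun y => ?_) _
          simp only
          rw [← mul_assoc, ← mul_assoc]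
          refine mul_le_mul_left ?_ _
          refine (mul_le_mul_left (aux_t_tail (k - 1) hs ‖y‖ (norm_nonneg y)) _).trans ?_
          rw [← ENNReal.ofReal_mul (by positivity), ← ENNReal.ofReal_mul (by positivity), mul_assoc]
          apply le_of_eq
          congr 2
          rw [← Real.rpow_two, ← Real.rpow_add' (norm_nonneg y) (by linarith)]
          congr 1; ring
      _ = _ := by
          rw [lintegral_const_mul' _ _ ENNReal.ofReal_ne_top, ← mul_assoc,
            ENNReal.ofReal_mul (by norm_num), ENNReal.ofReal_ofNat]
          rfl
  have p3 : ∫⁻ t in Set.Ioo (0:ℝ) 1, ENNReal.ofReal (t ^ (-1 - 2 * (k - 1))) *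
      (ENNReal.ofReal (8 * t ^ 2) * ∫⁻ y, ‖v y‖ₑ ^ 2)
      ≤ ENNReal.ofReal (8 * (1 / (2 - 2 * (k - 1)))) * NQ n v := by
    calc _ = ∫⁻ t in Set.Ioo (0:ℝ) 1, ENNReal.ofReal 8 * (ENNReal.ofReal (t ^ (1 - 2 * (k - 1))) *
          NQ n v) := by
          apply setLIntegral_congr_fun measurableSet_Ioo
          intro t ht
          have ht0 : 0 < t := ht.1
          simp only
          rw [← mul_assoc, ← mul_assoc, ← ENNReal.ofReal_mul (by positivity),
            ← ENNReal.ofReal_mul (by positivity)]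
          congr 2
          rw [show (1 - 2 * (k - 1)) = (-1 - 2 * (k - 1)) + 2 by ring, Real.rpow_add ht0,
            Real.rpow_two]
          ring
      _ = ENNReal.ofReal 8 * ((∫⁻ t in Set.Ioo (0:ℝ) 1, ENNReal.ofReal (t ^ (1 - 2 * (k - 1)))) *
          NQ n v) := by
          rw [lintegral_const_mul' _ _ ENNReal.ofReal_ne_top, lintegral_mul_const _ (mp _)]
      _ ≤ _ := by
          rw [ENNReal.ofReal_mul (by norm_num), mul_assoc]
          gcongr
          exact aux_t_fin _ (by linarith)
  -- assemble
  have hI : ∫⁻ t in Set.Ioo (0:ℝ) 1, ENNReal.ofReal (t ^ (-1 - 2 * (k - 1))) *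
      ∫⁻ x, ‖ddiff (EuclideanSpace.single i t) (coordSchw j v) x‖ₑ ^ 2
      ≤ ENNReal.ofReal (8 * C2) * BQ n k v
        + ENNReal.ofReal (72 * (1 / (2 * (k - 1)))) * DQ n k v
        + ENNReal.ofReal (8 * (1 / (2 - 2 * (k - 1)))) * NQ n v := by
    refine le_trans ?_ (add_le_add (add_le_add p1 p2) p3)
    have mA : AEMeasurable (fun t : ℝ => ENNReal.ofReal (t ^ (-1 - 2 * (k - 1))) *
      (ENNReal.ofReal (8 * t ^ 2) * ∫⁻ y, ‖v y‖ₑ ^ 2)) (volume.restrict (Set.Ioo (0:ℝ) 1)) := by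
      apply Measurable.aemeasurable
      apply (mp _).mul
      fun_prop
    have mB : AEMeasurable (fun t : ℝ => ENNReal.ofReal (t ^ (-1 - 2 * (k - 1))) *
      (72 * ∫⁻ y, ENNReal.ofReal (tailF t v y))) (volume.restrict (Set.Ioo (0:ℝ) 1)) := by
      apply Measurable.aemeasurable
      apply (mp _).mul
      apply Measurable.const_mul
      apply Measurable.lintegral_prod_right'
        (f := fun p : ℝ × Vn n => ENNReal.ofReal (tailF p.1 v p.2))
      apply Measurable.ennreal_ofReal
      unfold tailF
      apply Measurable.mul
      · refine Measurable.ite ?_ measurable_const measurable_const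
        exact measurableSet_lt measurable_const (by fun_prop)
      · fun_prop
    rw [← lintegral_add_right' _ mB, ← lintegral_add_right' _ mA]
    apply setLIntegral_mono' measurableSet_Ioo
    intro t ht
    rw [← mul_add, ← mul_add]
    gcongr
    exact aux_It i j t ht.1 ht.2 v
  calc _ ≤ ∫⁻ ξ : Vn n, ENNReal.ofReal C1 * (‖𝓕 (coordSchw j v) ξ‖ₑ ^ 2 +
        (∫⁻ t in Set.Ioo (0:ℝ) 1, ENNReal.ofReal (t ^ (-1 - 2 * (k - 1))) *
          ENNReal.ofReal ((2 - 2 * Real.cos (t * (2 * Real.pi * ξ i))) ^ 2))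
          * ‖𝓕 (coordSchw j v) ξ‖ₑ ^ 2) := by
        apply lintegral_mono
        intro ξ
        refine (mul_le_mul_left (h1 (2 * Real.pi * ξ i)) _).trans (le_of_eq ?_)
        rw [mul_assoc, add_mul, one_mul]
    _ = ENNReal.ofReal C1 * ((∫⁻ x, ‖coordSchw j v x‖ₑ ^ 2) +
        ∫⁻ t in Set.Ioo (0:ℝ) 1, ENNReal.ofReal (t ^ (-1 - 2 * (k - 1))) *
        ∫⁻ x, ‖ddiff (EuclideanSpace.single i t) (coordSchw j v) x‖ₑ ^ 2) := by
        rw [lintegral_const_mul' _ _ ENNReal.ofReal_ne_top, lintegral_add_left (by fun_prop)]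
        congr 2
        · exact aux_planch_lint (coordSchw j v).integrable ((coordSchw j v).memLp 2)
        · rw [← aux_tonelli (mp _) mw (by fun_prop)]
          simp_rw [aux_ddiff_lint]
    _ ≤ ENNReal.ofReal C1 * ((DQ n k v + NQ n v) + (ENNReal.ofReal (8 * C2) * BQ n k v
        + ENNReal.ofReal (72 * (1 / (2 * (k - 1)))) * DQ n k v
        + ENNReal.ofReal (8 * (1 / (2 - 2 * (k - 1)))) * NQ n v)) := by
        gcongr
        exact aux_coord_sq k hk1 j v
    _ ≤ _ := by
        rw [ENNReal.ofReal_mul hC1.le, mul_assoc]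
        gcongr
        rw [ENNReal.ofReal_add (by positivity) (by positivity),
          ENNReal.ofReal_add (by positivity) (by positivity),
          ENNReal.ofReal_add (by positivity) (by positivity), ENNReal.ofReal_one]
        generalize ENNReal.ofReal (8 * C2) = a1
        generalize ENNReal.ofReal (72 * (1 / (2 * (k - 1)))) = a2
        generalize ENNReal.ofReal (8 * (1 / (2 - 2 * (k - 1)))) = a3
        generalize BQ n k v = B
        generalize DQ n k v = D
        generalize NQ n v = N
        calc _ ≤ (D + N + (a1 * B + a2 * D + a3 * N)) +
              (B + a1 * D + a1 * N + a2 * B + a2 * N + a3 * B + a3 * D) := le_self_add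
          _ = _ := by ring

lemma aux_key (n : ℕ) (hn : 1 ≤ n) (k : ℝ) (hk1 : 1 < k) (hk2 : k < 2) : ∃ C : ℝ, 0 < C ∧
    ∀ (j : Fin n) (v : SchwartzMap (Vn n) ℂ),
    BQ n (k - 1) (coordSchw j v) ≤ ENNReal.ofReal C * (BQ n k v + DQ n k v + NQ n v) := by
  obtain ⟨C, hC, h⟩ := aux_key_i k hk1 hk2
  have hn' : (0:ℝ) < n := by exact_mod_cast hn
  refine ⟨n * (n * C), by positivity, fun j v => ?_⟩
  have hfgc : Continuous ⇑(𝓕 (coordSchw j v) : SchwartzMap (Vn n) ℂ) := (𝓕 (coordSchw j v)).continuous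
  calc BQ n (k - 1) (coordSchw j v) ≤ ∫⁻ ξ : Vn n, ENNReal.ofReal n * ∑ i,
        ENNReal.ofReal (|2 * Real.pi * ξ i| ^ (2 * (k - 1))) * ‖𝓕 (coordSchw j v) ξ‖ₑ ^ 2 := by
        apply lintegral_mono
        intro ξ
        simp only
        rw [← Finset.sum_mul, ← mul_assoc]
        gcongr
        rw [← ENNReal.ofReal_sum_of_nonneg (fun i _ => by positivity),
          ← ENNReal.ofReal_mul hn'.le]
        exact ENNReal.ofReal_le_ofReal
          (aux_norm_le_sum (k - 1) (by linarith) (by linarith) hn ξ)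
    _ = ENNReal.ofReal n * ∑ i, ∫⁻ ξ : Vn n,
        ENNReal.ofReal (|2 * Real.pi * ξ i| ^ (2 * (k - 1))) * ‖𝓕 (coordSchw j v) ξ‖ₑ ^ 2 := by
        rw [lintegral_const_mul' _ _ ENNReal.ofReal_ne_top, lintegral_finsetSum]
        intro i _
        refine Measurable.fun_mul ?_ (by fun_prop)
        apply Measurable.ennreal_ofReal
        apply Measurable.pow_const
        fun_prop
    _ ≤ ENNReal.ofReal n * ∑ _i : Fin n, ENNReal.ofReal C * (BQ n k v + DQ n k v + NQ n v) := by
        gcongr with i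
        exact h n i j v
    _ = _ := by
        rw [Finset.sum_const, Finset.card_univ, Fintype.card_fin, nsmul_eq_mul,
          ENNReal.ofReal_mul hn'.le, ENNReal.ofReal_mul hn'.le, ENNReal.ofReal_natCast]
        ring

lemma aux_enorm_add_sq (a b : ℂ) : ‖a + b‖ₑ ^ 2 ≤ 2 * ‖a‖ₑ ^ 2 + 2 * ‖b‖ₑ ^ 2 := by
  rw [aux_enorm_sq, aux_enorm_sq, aux_enorm_sq, ← ENNReal.ofReal_ofNat 2,
    ← ENNReal.ofReal_mul (by norm_num), ← ENNReal.ofReal_mul (by norm_num),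
    ← ENNReal.ofReal_add (by positivity) (by positivity)]
  apply ENNReal.ofReal_le_ofReal
  have := norm_add_le a b
  nlinarith [sq_nonneg (‖a‖ - ‖b‖), norm_nonneg (a + b), norm_nonneg a, norm_nonneg b]

set_option maxHeartbeats 1000000 in
lemma aux_N (n : ℕ) (hn : 1 ≤ n) (k : ℝ) (hk1 : 1 < k) : ∃ C : ℝ, 0 < C ∧
    ∀ (v : SchwartzMap (Vn n) ℂ), NQ n v ≤ ENNReal.ofReal C * (BQ n k v + DQ n k v) := by
  set M := (volume (Metric.ball (0 : Vn n) 1)).toReal with hM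
  have hM0 : 0 ≤ M := ENNReal.toReal_nonneg
  have hMe : volume (Metric.ball (0 : Vn n) 1) = ENNReal.ofReal M :=
    (ENNReal.ofReal_toReal measure_ball_lt_top.ne).symm
  set δ : ℝ := 1 / (2 * M ^ 2 + 1) with hδ
  have hδ0 : 0 < δ := by positivity
  have hδ1 : δ ≤ 1 := by
    rw [hδ, div_le_one (by positivity)]; nlinarith [sq_nonneg M]
  set S : Set (Vn n) := Metric.closedBall 0 δ with hS
  have mS : MeasurableSet S := Metric.isClosed_closedBall.measurableSet
  set U : Set (Vn n) := Metric.ball 0 1 with hU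
  have mU : MeasurableSet U := Metric.isOpen_ball.measurableSet
  have hvol : volume U * volume S ≤ 2⁻¹ := by
    rw [hS, hU, Measure.addHaar_closedBall _ _ hδ0.le, hMe, ← ENNReal.ofReal_mul (by positivity),
      ← ENNReal.ofReal_mul hM0,
      show (2⁻¹ : ℝ≥0∞) = ENNReal.ofReal 2⁻¹ by
        rw [ENNReal.ofReal_inv_of_pos (by norm_num), ENNReal.ofReal_ofNat]]
    apply ENNReal.ofReal_le_ofReal
    rw [finrank_euclideanSpace_fin]
    have h1 : δ ^ n ≤ δ := pow_le_of_le_one hδ0.le hδ1 (by omega)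
    have h2 : δ * (2 * M ^ 2 + 1) = 1 := by rw [hδ]; field_simp
    have h3 : M * (δ ^ n * M) ≤ M * (δ * M) := by gcongr
    nlinarith
  have hSfin : volume S < ⊤ := measure_closedBall_lt_top
  set K : ℝ := δ ^ (-(2 * k)) with hK
  have hK0 : 0 < K := by positivity
  refine ⟨4 + 5 * K, by positivity, fun v => ?_⟩
  have hvc := v.continuous
  have hfc : Continuous ⇑(𝓕 v : SchwartzMap (Vn n) ℂ) := (𝓕 v : SchwartzMap (Vn n) ℂ).continuous
  set w : Vn n → ℂ := S.indicator v with hw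
  set u : Vn n → ℂ := Sᶜ.indicator v with hu
  have iw : Integrable w := v.integrable.indicator mS
  have iu : Integrable u := v.integrable.indicator mS.compl
  have i2w : MemLp w 2 := (v.memLp 2).indicator mS
  have i2u : MemLp u 2 := (v.memLp 2).indicator mS.compl
  have hwu : ∀ x, v x = w x + u x := fun x => (Set.indicator_self_add_compl_apply S v x).symm
  have esq : ∀ (A : Set (Vn n)), MeasurableSet A →
      ∫⁻ x, ‖A.indicator v x‖ₑ ^ 2 = ∫⁻ x in A, ‖v x‖ₑ ^ 2 := by
    intro A hA
    rw [← lintegral_indicator hA]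
    congr 1; ext x
    by_cases h : x ∈ A <;> simp [h]
  set W := ∫⁻ x in S, ‖v x‖ₑ ^ 2 with hWd
  set T := ∫⁻ x in Sᶜ, ‖v x‖ₑ ^ 2 with hTd
  have hN : NQ n v = W + T := (lintegral_add_compl _ mS).symm
  have hWfin : W ≠ ⊤ := by
    rw [hWd, ← aux_eLpNorm_sq]
    exact ENNReal.pow_ne_top ((v.memLp 2 volume).restrict S).eLpNorm_ne_top
  -- tail in x
  have hT : T ≤ ENNReal.ofReal K * DQ n k v := by
    unfold DQ
    rw [← lintegral_const_mul' _ _ ENNReal.ofReal_ne_top]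
    refine le_trans (setLIntegral_mono' mS.compl (fun x hx => ?_)) (setLIntegral_le_lintegral Sᶜ _)
    rw [← mul_assoc, ← ENNReal.ofReal_mul hK0.le]
    have hx' : δ < ‖x‖ := by simpa [hS] using hx
    have : 1 ≤ K * ‖x‖ ^ (2 * k) := by
      rw [hK, Real.rpow_neg hδ0.le, inv_mul_eq_div, le_div_iff₀ (by positivity), one_mul]
      exact Real.rpow_le_rpow hδ0.le hx'.le (by linarith)
    calc ‖v x‖ₑ ^ 2 = ENNReal.ofReal 1 * ‖v x‖ₑ ^ 2 := by simp
      _ ≤ _ := by gcongr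
  -- tail in ξ
  have hB : ∫⁻ ξ in Uᶜ, ‖𝓕 v ξ‖ₑ ^ 2 ≤ BQ n k v := by
    refine le_trans (setLIntegral_mono' mU.compl (fun x hx => ?_)) (setLIntegral_le_lintegral Uᶜ _)
    have hx' : 1 ≤ ‖x‖ := by simpa [hU] using hx
    have : 1 ≤ (2 * Real.pi * ‖x‖) ^ (2 * k) := by
      apply Real.one_le_rpow _ (by linarith)
      nlinarith [Real.pi_gt_three]
    calc ‖𝓕 v x‖ₑ ^ 2 = ENNReal.ofReal 1 * ‖𝓕 v x‖ₑ ^ 2 := by simp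
      _ ≤ _ := by gcongr
  -- low frequencies
  have hlow : ∀ ξ, ‖𝓕 w ξ‖ₑ ^ 2 ≤ volume S * W := by
    intro ξ
    have h1 : ‖𝓕 w ξ‖ₑ ≤ eLpNorm v 1 (volume.restrict S) := by
      rw [Real.fourier_eq]
      refine (enorm_integral_le_lintegral_enorm _).trans ?_
      rw [eLpNorm_one_eq_lintegral_enorm, ← lintegral_indicator mS]
      apply lintegral_mono
      intro x
      have hc : ‖Real.fourierChar (-inner ℝ x ξ) • w x‖ₑ = ‖w x‖ₑ := by
        rw [← ofReal_norm, Circle.norm_smul, ofReal_norm]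
      simp only [hc]
      by_cases h : x ∈ S <;> simp [hw, h]
    have h2 := eLpNorm_le_eLpNorm_mul_rpow_measure_univ (p := 1) (q := 2) (f := v)
      (μ := volume.restrict S) (by norm_num) hvc.aestronglyMeasurable
    calc _ ≤ (eLpNorm v 2 (volume.restrict S) * (volume.restrict S) Set.univ ^
          (1 / (1:ℝ≥0∞).toReal - 1 / (2:ℝ≥0∞).toReal)) ^ 2 := by
          gcongr; exact h1.trans h2
      _ = _ := by
          rw [mul_pow, aux_eLpNorm_sq, Measure.restrict_apply_univ, mul_comm]
          congr 1
          rw [← ENNReal.rpow_natCast, ← ENNReal.rpow_mul]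
          norm_num
  have hfw : Continuous (𝓕 w) := aux_fourier_cont iw
  have hfu : Continuous (𝓕 u) := aux_fourier_cont iu
  have hsum : ∀ ξ, 𝓕 w ξ = 𝓕 v ξ + (- 𝓕 u ξ) := by
    intro ξ
    rw [SchwartzMap.fourier_coe]
    have : (v : Vn n → ℂ) = w + u := funext hwu
    rw [this, Real.fourier_eq, Real.fourier_eq, Real.fourier_eq]
    simp only [Pi.add_apply, smul_add]
    rw [integral_add ((Real.fourierIntegral_convergent_iff ξ).mpr iw)
      ((Real.fourierIntegral_convergent_iff ξ).mpr iu)]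
    ring
  have hmain : W ≤ 2⁻¹ * W + (2 * BQ n k v + 2 * T) := by
    calc W = ∫⁻ ξ, ‖𝓕 w ξ‖ₑ ^ 2 := by rw [aux_planch_lint iw i2w, hw, esq S mS]
      _ = (∫⁻ ξ in U, ‖𝓕 w ξ‖ₑ ^ 2) + ∫⁻ ξ in Uᶜ, ‖𝓕 w ξ‖ₑ ^ 2 := (lintegral_add_compl _ mU).symm
      _ ≤ (∫⁻ _ξ in U, volume S * W) + ∫⁻ ξ in Uᶜ, (2 * ‖𝓕 v ξ‖ₑ ^ 2 + 2 * ‖𝓕 u ξ‖ₑ ^ 2) := by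
          refine add_le_add (lintegral_mono fun ξ => hlow ξ) (lintegral_mono fun ξ => ?_)
          · simp only
            rw [hsum]
            refine (aux_enorm_add_sq _ _).trans ?_
            rw [enorm_neg]
      _ = volume S * W * volume U + (2 * (∫⁻ ξ in Uᶜ, ‖𝓕 v ξ‖ₑ ^ 2)
          + 2 * (∫⁻ ξ in Uᶜ, ‖𝓕 u ξ‖ₑ ^ 2)) := by
          rw [setLIntegral_const, lintegral_add_left (by fun_prop),
            lintegral_const_mul _ (by fun_prop), lintegral_const_mul _ (by fun_prop)]
      _ ≤ _ := by
          refine add_le_add ?_ (add_le_add (mul_le_mul_right hB _) (mul_le_mul_right ?_ _))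
          · calc _ = (volume U * volume S) * W := by ring
              _ ≤ _ := by gcongr
          · refine (setLIntegral_le_lintegral Uᶜ _).trans ?_
            rw [aux_planch_lint iu i2u, hu, esq _ mS.compl]
  have hW : W ≤ 4 * BQ n k v + 4 * T := by
    have e : W = 2⁻¹ * W + 2⁻¹ * W := by
      rw [← add_mul, ENNReal.inv_two_add_inv_two, one_mul]
    have h1 : 2⁻¹ * W ≤ 2 * BQ n k v + 2 * T := by
      have hf : 2⁻¹ * W ≠ ⊤ := ENNReal.mul_ne_top (by simp) hWfin
      refine (ENNReal.add_le_add_iff_left hf).mp ?_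
      rw [← e]; exact hmain
    rw [e]
    refine (add_le_add h1 h1).trans (le_of_eq ?_)
    ring
  calc NQ n v ≤ 4 * BQ n k v + 5 * T := by
        rw [hN]
        refine (add_le_add hW le_rfl).trans (le_of_eq ?_)
        ring
    _ ≤ 4 * BQ n k v + 5 * (ENNReal.ofReal K * DQ n k v) := by gcongr
    _ ≤ _ := by
        rw [ENNReal.ofReal_add (by norm_num) (by positivity), ENNReal.ofReal_mul (by norm_num),
          ENNReal.ofReal_ofNat, ENNReal.ofReal_ofNat]
        generalize BQ n k v = B
        generalize DQ n k v = D
        generalize ENNReal.ofReal K = K'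
        calc _ ≤ 4 * B + 5 * (K' * D) + (4 * D + 5 * K' * B) := le_self_add
          _ = _ := by ring

lemma aux_key2 (n : ℕ) (hn : 1 ≤ n) (k : ℝ) (hk1 : 1 < k) (hk2 : k < 2) : ∃ C : ℝ, 0 < C ∧
    ∀ (j : Fin n) (v : SchwartzMap (Vn n) ℂ),
    BQ n (k - 1) (coordSchw j v) ≤ ENNReal.ofReal C * (BQ n k v + DQ n k v) := by
  obtain ⟨C1, hC1, h1⟩ := aux_key n hn k hk1 hk2
  obtain ⟨C2, hC2, h2⟩ := aux_N n hn k hk1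
  refine ⟨C1 * (1 + C2), by positivity, fun j v => (h1 j v).trans ?_⟩
  rw [ENNReal.ofReal_mul hC1.le, ENNReal.ofReal_add (by norm_num) hC2.le, ENNReal.ofReal_one,
    mul_assoc, add_mul, one_mul]
  gcongr
  exact h2 v

/-- dilation -/
def dilS {n : ℕ} (c : ℝ) (hc : c ≠ 0) (v : SchwartzMap (Vn n) ℂ) : SchwartzMap (Vn n) ℂ :=
  SchwartzMap.compCLMOfContinuousLinearEquiv ℂ
    (ContinuousLinearEquiv.smulLeft (R₁ := ℝ) (Units.mk0 c hc)) v

lemma dilS_apply {n : ℕ} (c : ℝ) (hc : c ≠ 0) (v : SchwartzMap (Vn n) ℂ) (x : Vn n) :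
    dilS c hc v x = v (c • x) := rfl

lemma aux_lint_smul {n : ℕ} (c : ℝ) (hc : 0 < c) (f : Vn n → ℝ≥0∞) (hf : Measurable f) :
    ∫⁻ x, f (c • x) = ENNReal.ofReal ((c ^ n)⁻¹) * ∫⁻ x, f x := by
  have h := Measure.map_addHaar_smul (volume : Measure (Vn n)) hc.ne'
  rw [finrank_euclideanSpace_fin, abs_of_pos (by positivity)] at h
  rw [← lintegral_map hf (measurable_const_smul c), h, lintegral_smul_measure, smul_eq_mul]

lemma dilS_fourier {n : ℕ} (c : ℝ) (hc : 0 < c) (v : SchwartzMap (Vn n) ℂ) (ξ : Vn n) :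
    𝓕 (dilS c hc.ne' v) ξ = ((c ^ n)⁻¹ : ℝ) • 𝓕 v (c⁻¹ • ξ) := by
  rw [SchwartzMap.fourier_coe, SchwartzMap.fourier_coe, Real.fourier_eq, Real.fourier_eq]
  have := Measure.integral_comp_smul_of_nonneg (volume : Measure (Vn n))
    (fun y => Real.fourierChar (-inner ℝ y (c⁻¹ • ξ)) • v y) c (hR := hc.le)
  rw [finrank_euclideanSpace_fin] at this
  rw [← this]
  congr 1; ext x
  rw [dilS_apply, inner_smul_left, inner_smul_right]
  simp [hc.ne']

lemma DQ_dil {n : ℕ} (ℓ : ℝ) (c : ℝ) (hc : 0 < c) (v : SchwartzMap (Vn n) ℂ) :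
    DQ n ℓ (dilS c hc.ne' v) = ENNReal.ofReal ((c ^ n)⁻¹ * c ^ (-(2 * ℓ))) * DQ n ℓ v := by
  have hvc := v.continuous
  unfold DQ
  have e : ∀ x : Vn n, ENNReal.ofReal (‖x‖ ^ (2 * ℓ)) * ‖dilS c hc.ne' v x‖ₑ ^ 2 =
      ENNReal.ofReal (c ^ (-(2 * ℓ))) * (fun y : Vn n => ENNReal.ofReal (‖y‖ ^ (2 * ℓ)) * ‖v y‖ₑ ^ 2)
        (c • x) := by
    intro x
    simp only
    rw [dilS_apply, ← mul_assoc, ← ENNReal.ofReal_mul (by positivity)]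
    congr 2
    rw [norm_smul, Real.norm_of_nonneg hc.le, Real.mul_rpow hc.le (norm_nonneg x), ← mul_assoc,
      ← Real.rpow_add hc]
    simp
  simp_rw [e]
  rw [lintegral_const_mul' _ _ ENNReal.ofReal_ne_top, aux_lint_smul c hc
    (fun y : Vn n => ENNReal.ofReal (‖y‖ ^ (2 * ℓ)) * ‖v y‖ₑ ^ 2), ← mul_assoc,
    ← ENNReal.ofReal_mul (by positivity), mul_comm (c ^ _)]
  exact Measurable.fun_mul ((measurable_norm.pow_const _).ennreal_ofReal) (by fun_prop)

lemma BQ_dil {n : ℕ} (ℓ : ℝ) (c : ℝ) (hc : 0 < c) (v : SchwartzMap (Vn n) ℂ) :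
    BQ n ℓ (dilS c hc.ne' v) = ENNReal.ofReal ((c ^ n)⁻¹ * c ^ (2 * ℓ)) * BQ n ℓ v := by
  have hvc : Continuous ⇑(𝓕 v : SchwartzMap (Vn n) ℂ) := (𝓕 v : SchwartzMap (Vn n) ℂ).continuous
  have hc' : 0 < c⁻¹ := by positivity
  unfold BQ
  have e : ∀ x : Vn n, ENNReal.ofReal ((2 * Real.pi * ‖x‖) ^ (2 * ℓ)) *
      ‖𝓕 (dilS c hc.ne' v) x‖ₑ ^ 2 =
      ENNReal.ofReal (((c ^ n)⁻¹) ^ 2 * c ^ (2 * ℓ)) * (fun y : Vn n =>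
        ENNReal.ofReal ((2 * Real.pi * ‖y‖) ^ (2 * ℓ)) * ‖𝓕 v y‖ₑ ^ 2) (c⁻¹ • x) := by
    intro x
    simp only
    rw [dilS_fourier c hc, enorm_smul, mul_pow]
    have e1 : ‖((c ^ n)⁻¹ : ℝ)‖ₑ ^ 2 = ENNReal.ofReal (((c ^ n)⁻¹) ^ 2) := by
      rw [← ofReal_norm, Real.norm_of_nonneg (by positivity), ENNReal.ofReal_pow (by positivity)]
    rw [e1, ← mul_assoc, ← mul_assoc, ← ENNReal.ofReal_mul (by positivity),
      ← ENNReal.ofReal_mul (by positivity)]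
    congr 2
    rw [norm_smul, Real.norm_of_nonneg hc'.le, show 2 * Real.pi * (c⁻¹ * ‖x‖) = c⁻¹ * (2 * Real.pi * ‖x‖) by ring,
      Real.mul_rpow hc'.le (by positivity), Real.inv_rpow hc.le]
    field_simp
  simp_rw [e]
  rw [lintegral_const_mul' _ _ ENNReal.ofReal_ne_top, aux_lint_smul c⁻¹ hc'
    (fun y : Vn n => ENNReal.ofReal ((2 * Real.pi * ‖y‖) ^ (2 * ℓ)) * ‖𝓕 v y‖ₑ ^ 2), ← mul_assoc,
    ← ENNReal.ofReal_mul (by positivity)]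
  · congr 2
    rw [inv_pow c n]
    field_simp
  · exact Measurable.fun_mul (((measurable_norm.const_mul _).pow_const _).ennreal_ofReal)
      (by fun_prop)

lemma coord_dil {n : ℕ} (j : Fin n) (c : ℝ) (hc : 0 < c) (v : SchwartzMap (Vn n) ℂ) :
    coordSchw j (dilS c hc.ne' v) = ((c⁻¹ : ℝ) : ℂ) • dilS c hc.ne' (coordSchw j v) := by
  ext x
  rw [SchwartzMap.smul_apply, dilS_apply, ← coordSchw_coe, ← coordSchw_coe]
  simp only
  rw [dilS_apply]
  have : (c : ℂ) ≠ 0 := by exact_mod_cast hc.ne'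
  simp
  field_simp

lemma BQ_smul {n : ℕ} (ℓ : ℝ) (c : ℝ) (hc : 0 < c) (v : SchwartzMap (Vn n) ℂ) :
    BQ n ℓ ((c : ℂ) • v) = ENNReal.ofReal (c ^ 2) * BQ n ℓ v := by
  unfold BQ
  rw [← lintegral_const_mul' _ _ ENNReal.ofReal_ne_top]
  congr 1; ext ξ
  have : 𝓕 ((c : ℂ) • v) = (c : ℂ) • 𝓕 v := FourierTransform.fourier_smul _ _
  rw [this, SchwartzMap.smul_apply, enorm_smul, mul_pow, aux_enorm_sq (c : ℂ), Complex.norm_real,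
    Real.norm_of_nonneg hc.le]
  ring

lemma aux_scaled {n : ℕ} {k C : ℝ} (hC : 0 < C) (h : ∀ (j : Fin n) (v : SchwartzMap (Vn n) ℂ),
    BQ n (k - 1) (coordSchw j v) ≤ ENNReal.ofReal C * (BQ n k v + DQ n k v))
    (j : Fin n) (v : SchwartzMap (Vn n) ℂ) (c : ℝ) (hc : 0 < c) :
    BQ n (k - 1) (coordSchw j v) ≤ ENNReal.ofReal C *
      (ENNReal.ofReal (c ^ (4:ℝ)) * BQ n k v + ENNReal.ofReal (c ^ (4 - 4 * k)) * DQ n k v) := by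
  have h1 := h j (dilS c hc.ne' v)
  rw [coord_dil j c hc, BQ_smul _ _ (by positivity), BQ_dil _ c hc, BQ_dil _ c hc, DQ_dil _ c hc]
    at h1
  set p : ℝ := c ^ n * c ^ (4 - 2 * k) with hp
  have hp0 : 0 < p := by positivity
  have h2 := mul_le_mul_right h1 (ENNReal.ofReal p)
  have e1 : p * (c⁻¹ ^ 2 * ((c ^ n)⁻¹ * c ^ (2 * (k - 1)))) = 1 := by
    have : c⁻¹ ^ 2 = c ^ (-2:ℝ) := by rw [Real.rpow_neg hc.le, Real.rpow_two, inv_pow]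
    rw [this, hp]
    have : c ^ (4 - 2 * k) * c ^ (-2:ℝ) * c ^ (2 * (k - 1)) = 1 := by
      rw [← Real.rpow_add hc, ← Real.rpow_add hc, show 4 - 2 * k + -2 + 2 * (k - 1) = 0 by ring,
        Real.rpow_zero]
    calc _ = (c ^ n * (c ^ n)⁻¹) * (c ^ (4 - 2 * k) * c ^ (-2:ℝ) * c ^ (2 * (k - 1))) := by ring
      _ = 1 := by rw [this, mul_inv_cancel₀ (by positivity), one_mul]
  have e2 : p * ((c ^ n)⁻¹ * c ^ (2 * k)) = c ^ (4:ℝ) := by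
    calc _ = (c ^ n * (c ^ n)⁻¹) * (c ^ (4 - 2 * k) * c ^ (2 * k)) := by rw [hp]; ring
      _ = _ := by
        rw [mul_inv_cancel₀ (by positivity), one_mul, ← Real.rpow_add hc]
        congr 1; ring
  have e3 : p * ((c ^ n)⁻¹ * c ^ (-(2 * k))) = c ^ (4 - 4 * k) := by
    calc _ = (c ^ n * (c ^ n)⁻¹) * (c ^ (4 - 2 * k) * c ^ (-(2 * k))) := by rw [hp]; ring
      _ = _ := by
        rw [mul_inv_cancel₀ (by positivity), one_mul, ← Real.rpow_add hc]
        congr 1; ring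
  calc _ = ENNReal.ofReal p * (ENNReal.ofReal (c⁻¹ ^ 2) * (ENNReal.ofReal ((c ^ n)⁻¹ *
        c ^ (2 * (k - 1))) * BQ n (k - 1) (coordSchw j v))) := by
        rw [← mul_assoc, ← mul_assoc, ← ENNReal.ofReal_mul (by positivity),
          ← ENNReal.ofReal_mul (by positivity), mul_assoc p, e1, ENNReal.ofReal_one, one_mul]
    _ ≤ _ := h2
    _ = _ := by
        rw [← e2, ← e3, ENNReal.ofReal_mul hp0.le, ENNReal.ofReal_mul hp0.le]
        ring

lemma aux_opt_pos {a b d C k : ℝ} (hk : 1 < k) (hb : 0 < b) (hd : 0 < d)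
    (h : ∀ c : ℝ, 0 < c → a ≤ C * (c ^ (4:ℝ) * b + c ^ (4 - 4 * k) * d)) :
    a ≤ 2 * C * (b ^ (1 - 1 / k) * d ^ (1 / k)) := by
  have hk0 : k ≠ 0 := by linarith
  have hq : 0 < d / b := by positivity
  have h1 := h ((d / b) ^ (1 / (4 * k))) (by positivity)
  rw [← Real.rpow_mul hq.le, ← Real.rpow_mul hq.le,
    show 1 / (4 * k) * 4 = 1 / k by field_simp,
    show 1 / (4 * k) * (4 - 4 * k) = 1 / k - 1 by field_simp] at h1
  have e1 : (d / b) ^ (1 / k) * b = b ^ (1 - 1 / k) * d ^ (1 / k) := by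
    rw [Real.div_rpow hd.le hb.le, Real.rpow_sub hb, Real.rpow_one]
    field_simp
  have e2 : (d / b) ^ (1 / k - 1) * d = b ^ (1 - 1 / k) * d ^ (1 / k) := by
    rw [Real.rpow_sub hq, Real.rpow_one, ← e1]
    field_simp
  rw [e1, e2] at h1
  linarith

lemma aux_opt {a b d C k : ℝ} (hk : 1 < k) (hC : 0 ≤ C) (hb : 0 ≤ b) (hd : 0 ≤ d)
    (h : ∀ c : ℝ, 0 < c → a ≤ C * (c ^ (4:ℝ) * b + c ^ (4 - 4 * k) * d)) :
    a ≤ 2 * C * (b ^ (1 - 1 / k) * d ^ (1 / k)) := by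
  have hp : 0 < 1 - 1 / k := by
    rw [sub_pos, div_lt_one (by linarith)]; exact hk
  have hp' : 0 < 1 / k := by positivity
  have key : ∀ ε : ℝ, 0 < ε → a ≤ 2 * C * ((b + ε) ^ (1 - 1 / k) * (d + ε) ^ (1 / k)) := by
    intro ε hε
    refine aux_opt_pos hk (by linarith) (by linarith) (fun c hc => (h c hc).trans ?_)
    gcongr <;> linarith
  have hcont : Continuous fun ε : ℝ =>
      2 * C * ((b + ε) ^ (1 - 1 / k) * (d + ε) ^ (1 / k)) := by
    have c1 := (Real.continuous_rpow_const hp.le).comp (continuous_const.add continuous_id : Continuous fun ε : ℝ => b + ε)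
    have c2 := (Real.continuous_rpow_const hp'.le).comp (continuous_const.add continuous_id : Continuous fun ε : ℝ => d + ε)
    exact continuous_const.mul (c1.mul c2)
  have ht := (hcont.tendsto 0).mono_left (nhdsWithin_le_nhds (s := Set.Ioi (0:ℝ)))
  have := ge_of_tendsto ht (Filter.eventually_of_mem self_mem_nhdsWithin (fun ε hε => key ε hε))
  simpa using this

lemma aux_opt_enn {A B D : ℝ≥0∞} {C k : ℝ} (hk : 1 < k) (hC : 0 ≤ C) (hB : B ≠ ⊤) (hD : D ≠ ⊤)
    (h : ∀ c : ℝ, 0 < c → A ≤ ENNReal.ofReal C *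
      (ENNReal.ofReal (c ^ (4:ℝ)) * B + ENNReal.ofReal (c ^ (4 - 4 * k)) * D)) :
    A ≤ ENNReal.ofReal (2 * C) * (B ^ (1 - 1 / k) * D ^ (1 / k)) := by
  have hp : 0 < 1 - 1 / k := by
    rw [sub_pos, div_lt_one (by linarith)]; exact hk
  have hp' : 0 < 1 / k := by positivity
  lift B to NNReal using hB
  lift D to NNReal using hD
  have hAt : A ≠ ⊤ := by
    refine ne_top_of_le_ne_top ?_ (h 1 one_pos)
    finiteness
  lift A to NNReal using hAt
  have := aux_opt (a := A) (b := B) (d := D) hk hC B.coe_nonneg D.coe_nonneg (fun c hc => by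
    have h1 := h c hc
    rw [← ENNReal.ofReal_coe_nnreal (p := B), ← ENNReal.ofReal_coe_nnreal (p := D),
      ← ENNReal.ofReal_coe_nnreal (p := A), ← ENNReal.ofReal_mul (by positivity),
      ← ENNReal.ofReal_mul (by positivity), ← ENNReal.ofReal_add (by positivity) (by positivity),
      ← ENNReal.ofReal_mul (by positivity)] at h1
    exact (ENNReal.ofReal_le_ofReal_iff (by positivity)).mp h1)
  rw [← ENNReal.ofReal_coe_nnreal (p := B), ← ENNReal.ofReal_coe_nnreal (p := D),
      ← ENNReal.ofReal_coe_nnreal (p := A), ENNReal.ofReal_rpow_of_nonneg B.coe_nonneg hp.le,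
      ENNReal.ofReal_rpow_of_nonneg D.coe_nonneg hp'.le, ← ENNReal.ofReal_mul (by positivity),
      ← ENNReal.ofReal_mul (by positivity)]
  exact ENNReal.ofReal_le_ofReal this

lemma aux_pow_le {r ℓ : ℝ} (hr : 0 ≤ r) (h0 : 0 ≤ ℓ) (h2 : ℓ ≤ 2) : r ^ ℓ ≤ 1 + r ^ 2 := by
  rcases le_or_gt r 1 with h | h
  · have := Real.rpow_le_one hr h h0
    nlinarith [sq_nonneg r]
  · have := Real.rpow_le_rpow_of_exponent_le h.le h2
    rw [Real.rpow_two] at this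
    linarith

lemma aux_jap_le {r ℓ : ℝ} (h2 : ℓ ≤ 2) :
    (1 + r ^ 2) ^ (ℓ / 2) ≤ 1 + r ^ 2 := by
  calc (1 + r ^ 2) ^ (ℓ / 2) ≤ (1 + r ^ 2) ^ (1:ℝ) :=
        Real.rpow_le_rpow_of_exponent_le (by nlinarith [sq_nonneg r]) (by linarith)
    _ = _ := Real.rpow_one _

lemma om_cont {n : ℕ} {ℓ : ℝ} (h0 : 0 ≤ ℓ) :
    Continuous fun ξ : Vn n => (2 * Real.pi * ‖ξ‖) ^ ℓ :=
  (continuous_const.mul continuous_norm).rpow_const (fun _ => Or.inr h0)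

lemma jap_cont {n : ℕ} {ℓ : ℝ} (h0 : 0 ≤ ℓ) :
    Continuous fun ξ : Vn n => (1 + (2 * Real.pi * ‖ξ‖) ^ 2) ^ (ℓ / 2) :=
  Continuous.rpow_const (by fun_prop) (fun _ => Or.inr (by linarith))

lemma om_sq {n : ℕ} {ℓ : ℝ} (h0 : 0 ≤ ℓ) (h2 : ℓ ≤ 2) (v : SchwartzMap (Vn n) ℂ) :
    eLpNorm (omMul n ℓ (fun y => v y)) 2 volume ^ 2 = BQ n ℓ v := by
  unfold omMul BQ
  rw [aux_mul_sq v (om_cont h0) (fun x => by positivity)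
    (fun x => aux_pow_le (by positivity) h0 h2)]
  congr 1; ext ξ
  congr 2
  rw [← Real.rpow_natCast, ← Real.rpow_mul (by positivity)]
  congr 1
  push_cast; ring

lemma jap_sq {n : ℕ} {ℓ : ℝ} (h0 : 0 ≤ ℓ) (h2 : ℓ ≤ 2) (v : SchwartzMap (Vn n) ℂ) :
    eLpNorm (japMul n ℓ (fun y => v y)) 2 volume ^ 2 =
      ∫⁻ ξ : Vn n, ENNReal.ofReal ((1 + (2 * Real.pi * ‖ξ‖) ^ 2) ^ ℓ) * ‖𝓕 v ξ‖ₑ ^ 2 := by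
  unfold japMul
  rw [aux_mul_sq v (jap_cont h0) (fun x => by positivity) (fun x => aux_jap_le h2)]
  congr 1; ext ξ
  congr 2
  rw [← Real.rpow_natCast, ← Real.rpow_mul (by positivity)]
  congr 1
  push_cast; ring

lemma aux_inv_cont {n : ℕ} (v : SchwartzMap (Vn n) ℂ) {m : Vn n → ℝ} (hm : Continuous m)
    (hm0 : ∀ x, 0 ≤ m x) (hm1 : ∀ x, m x ≤ 1 + (2 * Real.pi * ‖x‖) ^ 2) :
    Continuous (𝓕⁻ (fun ξ => (m ξ : ℂ) * 𝓕 (fun y => v y) ξ)) := by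
  have h1 := aux_memLp_mul (𝓕 v) hm hm0 hm1 1
  have e : (fun ξ => (m ξ : ℂ) * 𝓕 (fun y => v y) ξ) = (fun ξ => (m ξ : ℂ) * (𝓕 v) ξ) := rfl
  rw [e]
  have hc := aux_fourier_cont (memLp_one_iff_integrable.mp h1)
  have : 𝓕⁻ (fun ξ => (m ξ : ℂ) * (𝓕 v) ξ) = fun x => 𝓕 (fun ξ => (m ξ : ℂ) * (𝓕 v) ξ) (-x) := by
    ext x
    rw [Real.fourierInv_eq_fourier_neg]
  rw [this]
  exact hc.comp continuous_neg

lemma vec_sq {n : ℕ} (F : Fin n → Vn n → ℂ) (hF : ∀ j, Continuous (F j)) :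
    eLpNorm (fun x : Vn n => (WithLp.equiv 2 (Fin n → ℂ)).symm (fun j => F j x)) 2 volume ^ 2
      = ∑ j, eLpNorm (F j) 2 volume ^ 2 := by
  simp_rw [aux_eLpNorm_sq]
  rw [← lintegral_finsetSum _ (fun j _ => by have := hF j; fun_prop)]
  congr 1; ext x
  rw [← ofReal_norm, ← ENNReal.ofReal_pow (norm_nonneg _), EuclideanSpace.norm_sq_eq,
    ENNReal.ofReal_sum_of_nonneg (fun i _ => by positivity)]
  simp_rw [aux_enorm_sq]
  rfl

lemma DQ_eq {n : ℕ} {k : ℝ} (v : SchwartzMap (Vn n) ℂ) :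
    eLpNorm (fun x : Vn n => ((‖x‖ ^ k : ℝ) : ℂ) * v x) 2 volume ^ 2 = DQ n k v := by
  rw [aux_eLpNorm_sq]
  unfold DQ
  congr 1; ext x
  rw [enorm_mul, mul_pow, aux_enorm_sq, Complex.norm_real, Real.norm_of_nonneg (by positivity),
    ← Real.rpow_natCast, ← Real.rpow_mul (by positivity),
    show k * ((2:ℕ):ℝ) = 2 * k by push_cast; ring]

lemma BQ_fin {n : ℕ} {k : ℝ} (h0 : 0 ≤ k) (h2 : k ≤ 2) (v : SchwartzMap (Vn n) ℂ) :
    BQ n k v ≠ ⊤ := by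
  have := (aux_memLp_mul (𝓕 v) (om_cont h0) (fun x => by positivity)
    (fun x => aux_pow_le (by positivity) h0 h2) 2).eLpNorm_ne_top
  have h3 := ENNReal.pow_ne_top (n := 2) this
  rw [aux_eLpNorm_sq] at h3
  unfold BQ
  convert h3 using 3 with ξ
  rw [enorm_mul, mul_pow, aux_enorm_sq (((_ : ℝ) : ℂ)), Complex.norm_real,
    Real.norm_of_nonneg (by positivity), ← Real.rpow_natCast, ← Real.rpow_mul (by positivity)]
  congr 3
  push_cast; ring

lemma DQ_fin {n : ℕ} {k : ℝ} (h0 : 0 ≤ k) (h2 : k ≤ 2) (v : SchwartzMap (Vn n) ℂ) :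
    DQ n k v ≠ ⊤ := by
  rw [← DQ_eq]
  apply ENNReal.pow_ne_top
  refine (aux_memLp_mul v (continuous_norm.rpow_const (fun _ => Or.inr h0))
    (fun x => by positivity) (fun x => (aux_pow_le (norm_nonneg x) h0 h2).trans ?_)
    2).eLpNorm_ne_top
  have : ‖x‖ ≤ 2 * Real.pi * ‖x‖ := by nlinarith [norm_nonneg x, Real.pi_gt_three]
  gcongr

lemma aux_sq_le {a b : ℝ≥0∞} {c : ℝ} (hc : 0 ≤ c) (h : a ^ 2 ≤ ENNReal.ofReal c * b ^ 2) :
    a ≤ ENNReal.ofReal (Real.sqrt c) * b := by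
  rw [← ENNReal.pow_le_pow_left_iff (n := 2) (by norm_num), mul_pow,
    ← ENNReal.ofReal_pow (Real.sqrt_nonneg _), Real.sq_sqrt hc]
  exact h

lemma BQ_le_jap {n : ℕ} {k : ℝ} (h0 : 0 ≤ k) (h2 : k ≤ 2) (v : SchwartzMap (Vn n) ℂ) :
    BQ n k v ≤ eLpNorm (japMul n k (fun y => v y)) 2 volume ^ 2 := by
  rw [jap_sq h0 h2]
  unfold BQ
  gcongr with ξ
  rw [Real.rpow_mul (by positivity), Real.rpow_two]
  gcongr
  linarith

lemma DQ_le_jap {n : ℕ} {k : ℝ} (h0 : 0 ≤ k) (v : SchwartzMap (Vn n) ℂ) :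
    DQ n k v ≤
      eLpNorm (fun x : Vn n => (((1 + ‖x‖ ^ 2) ^ (k / 2) : ℝ) : ℂ) * v x) 2 volume ^ 2 := by
  rw [aux_eLpNorm_sq]
  unfold DQ
  gcongr with x
  rw [enorm_mul, mul_pow]
  gcongr
  rw [aux_enorm_sq, Complex.norm_real, Real.norm_of_nonneg (by positivity), ← Real.rpow_natCast,
    ← Real.rpow_mul (by positivity), Real.rpow_mul (by positivity), Real.rpow_two,
    show k / 2 * ((2:ℕ):ℝ) = k by push_cast; ring]
  gcongr
  linarith

lemma jap_le_sum {r s : ℝ} (hr : 0 ≤ r) (h0 : 0 ≤ s) (h1 : s ≤ 1) :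
    (1 + r ^ 2) ^ s ≤ 2 * (1 + r ^ (2 * s)) := by
  have hr2 : 0 ≤ r ^ (2 * s) := by positivity
  have h2 : (2:ℝ) ^ s ≤ 2 := by
    calc (2:ℝ) ^ s ≤ 2 ^ (1:ℝ) := Real.rpow_le_rpow_of_exponent_le (by norm_num) h1
      _ = 2 := Real.rpow_one _
  rcases le_or_gt r 1 with h | h
  · calc (1 + r ^ 2) ^ s ≤ 2 ^ s := by gcongr; nlinarith
      _ ≤ _ := by linarith
  · calc (1 + r ^ 2) ^ s ≤ (2 * r ^ 2) ^ s := by gcongr; nlinarith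
      _ = 2 ^ s * r ^ (2 * s) := by
        rw [Real.mul_rpow (by norm_num) (by positivity), Real.rpow_mul hr, Real.rpow_two]
      _ ≤ 2 * r ^ (2 * s) := by gcongr
      _ ≤ _ := by linarith

lemma jap_coord_le {n : ℕ} {k : ℝ} (hk1 : 1 < k) (hk2 : k < 2) (g : SchwartzMap (Vn n) ℂ) :
    eLpNorm (japMul n (k - 1) (fun y => g y)) 2 volume ^ 2 ≤
      2 * ((∫⁻ x, ‖g x‖ₑ ^ 2) + BQ n (k - 1) g) := by
  have hfc : Continuous ⇑(𝓕 g : SchwartzMap (Vn n) ℂ) := (𝓕 g : SchwartzMap (Vn n) ℂ).continuous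
  rw [jap_sq (by linarith) (by linarith), ← aux_planch_lint g.integrable (g.memLp 2)]
  unfold BQ
  have e : ∫⁻ ξ, ‖𝓕 (g : Vn n → ℂ) ξ‖ₑ ^ 2 = ∫⁻ ξ, ‖𝓕 g ξ‖ₑ ^ 2 := rfl
  rw [e, ← lintegral_add_left (by fun_prop), ← lintegral_const_mul' _ _ (by norm_num)]
  apply lintegral_mono
  intro ξ
  simp only
  calc _ ≤ ENNReal.ofReal (2 * (1 + (2 * Real.pi * ‖ξ‖) ^ (2 * (k - 1)))) * ‖𝓕 g ξ‖ₑ ^ 2 := by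
        gcongr
        exact jap_le_sum (by positivity) (by linarith) (by linarith)
    _ = _ := by
        rw [ENNReal.ofReal_mul (by norm_num), ENNReal.ofReal_add (by norm_num) (by positivity),
          ENNReal.ofReal_one, ENNReal.ofReal_ofNat]
        ring

lemma aux_first (n : ℕ) (hn : 1 ≤ n) (k : ℝ) (hk1 : 1 < k) (hk2 : k < 2) :
    ∃ C : ℝ, 0 < C ∧ ∀ v : SchwartzMap (Vn n) ℂ,
      eLpNorm (fun x : Vn n => (WithLp.equiv 2 (Fin n → ℂ)).symm
          (fun j => japMul n (k - 1) (fun y => (y j : ℂ) * v y) x)) 2 volume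
        ≤ ENNReal.ofReal C *
          (eLpNorm (japMul n k (fun y => v y)) 2 volume
            + eLpNorm (fun x : Vn n => (((1 + ‖x‖ ^ 2) ^ (k / 2) : ℝ) : ℂ) * v x) 2 volume) := by
  obtain ⟨C1, hC1, h1⟩ := aux_key2 n hn k hk1 hk2
  obtain ⟨C2, hC2, h2⟩ := aux_N n hn k hk1
  have hn' : (0:ℝ) < n := by exact_mod_cast hn
  set K := n * (2 * (1 + C2 + C1)) with hK
  have hK0 : 0 < K := by positivity
  refine ⟨Real.sqrt K, Real.sqrt_pos.mpr hK0, fun v => aux_sq_le hK0.le ?_⟩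
  set X := eLpNorm (japMul n k (fun y => v y)) 2 volume with hX
  set Y := eLpNorm (fun x : Vn n => (((1 + ‖x‖ ^ 2) ^ (k / 2) : ℝ) : ℂ) * v x) 2 volume with hY
  have hBX : BQ n k v ≤ X ^ 2 := BQ_le_jap (by linarith) hk2.le v
  have hDY : DQ n k v ≤ Y ^ 2 := DQ_le_jap (by linarith) v
  have hj : ∀ j : Fin n, eLpNorm (japMul n (k - 1) (fun y => (y j : ℂ) * v y)) 2 volume ^ 2 ≤
      ENNReal.ofReal (2 * (1 + C2 + C1)) * (X + Y) ^ 2 := by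
    intro j
    rw [coordSchw_coe]
    refine (jap_coord_le hk1 hk2 (coordSchw j v)).trans ?_
    calc _ ≤ 2 * ((DQ n k v + ENNReal.ofReal C2 * (BQ n k v + DQ n k v)) +
          ENNReal.ofReal C1 * (BQ n k v + DQ n k v)) := by
          gcongr
          · exact (aux_coord_sq k hk1 j v).trans (by gcongr; exact h2 v)
          · exact h1 j v
      _ ≤ 2 * (((BQ n k v + DQ n k v) + ENNReal.ofReal C2 * (BQ n k v + DQ n k v)) +
          ENNReal.ofReal C1 * (BQ n k v + DQ n k v)) := by
          gcongr
          exact le_add_self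
      _ = ENNReal.ofReal (2 * (1 + C2 + C1)) * (BQ n k v + DQ n k v) := by
          rw [ENNReal.ofReal_mul (by norm_num), ENNReal.ofReal_add (by positivity) hC1.le,
            ENNReal.ofReal_add (by norm_num) hC2.le, ENNReal.ofReal_one, ENNReal.ofReal_ofNat]
          ring
      _ ≤ ENNReal.ofReal (2 * (1 + C2 + C1)) * (X ^ 2 + Y ^ 2) := by gcongr
      _ ≤ _ := by
          gcongr
          calc X ^ 2 + Y ^ 2 ≤ X ^ 2 + Y ^ 2 + 2 * X * Y := le_self_add
            _ = _ := by ring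
  rw [vec_sq (fun j => japMul n (k - 1) (fun y => (y j : ℂ) * v y))]
  · calc _ ≤ ∑ _j : Fin n, ENNReal.ofReal (2 * (1 + C2 + C1)) * (X + Y) ^ 2 :=
          Finset.sum_le_sum (fun j _ => hj j)
      _ = _ := by
          rw [Finset.sum_const, Finset.card_univ, Fintype.card_fin, nsmul_eq_mul, hK,
            ENNReal.ofReal_mul hn'.le, ENNReal.ofReal_natCast]
          ring
  · intro j
    rw [coordSchw_coe]
    exact aux_inv_cont (coordSchw j v) (jap_cont (by linarith)) (fun x => by positivity)
      (fun x => aux_jap_le (by linarith))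

lemma aux_second (n : ℕ) (hn : 1 ≤ n) (k : ℝ) (hk1 : 1 < k) (hk2 : k < 2) :
    ∃ C : ℝ, 0 < C ∧ ∀ v : SchwartzMap (Vn n) ℂ,
      eLpNorm (fun x : Vn n => (WithLp.equiv 2 (Fin n → ℂ)).symm
          (fun j => omMul n (k - 1) (fun y => (y j : ℂ) * v y) x)) 2 volume
        ≤ ENNReal.ofReal C *
          (eLpNorm (omMul n k (fun y => v y)) 2 volume) ^ (1 - 1 / k) *
          (eLpNorm (fun x : Vn n => ((‖x‖ ^ k : ℝ) : ℂ) * v x) 2 volume) ^ (1 / k) := by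
  obtain ⟨C1, hC1, h1⟩ := aux_key2 n hn k hk1 hk2
  have hn' : (0:ℝ) < n := by exact_mod_cast hn
  have hK0 : 0 < n * (2 * C1) := by positivity
  refine ⟨Real.sqrt (n * (2 * C1)), Real.sqrt_pos.mpr hK0, fun v => ?_⟩
  rw [mul_assoc]
  refine aux_sq_le hK0.le ?_
  set X := eLpNorm (omMul n k (fun y => v y)) 2 volume with hX
  set Y := eLpNorm (fun x : Vn n => ((‖x‖ ^ k : ℝ) : ℂ) * v x) 2 volume with hY
  have hBX : X ^ 2 = BQ n k v := om_sq (by linarith) hk2.le v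
  have hDY : Y ^ 2 = DQ n k v := DQ_eq v
  have hsw : ∀ (Z : ℝ≥0∞) (p : ℝ), (Z ^ p) ^ 2 = (Z ^ 2) ^ p := by
    intro Z p
    rw [← ENNReal.rpow_natCast, ← ENNReal.rpow_natCast, ← ENNReal.rpow_mul, ← ENNReal.rpow_mul,
      mul_comm]
  rw [mul_pow, hsw, hsw, hBX, hDY]
  have hj : ∀ j : Fin n, eLpNorm (omMul n (k - 1) (fun y => (y j : ℂ) * v y)) 2 volume ^ 2 ≤
      ENNReal.ofReal (2 * C1) * (BQ n k v ^ (1 - 1 / k) * DQ n k v ^ (1 / k)) := by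
    intro j
    rw [coordSchw_coe]
    have e := om_sq (n := n) (ℓ := k - 1) (by linarith) (by linarith) (coordSchw j v)
    refine e.le.trans ?_
    exact aux_opt_enn hk1 hC1.le (BQ_fin (by linarith) hk2.le v) (DQ_fin (by linarith) hk2.le v)
      (fun c hc => aux_scaled hC1 h1 j v c hc)
  rw [vec_sq (fun j => omMul n (k - 1) (fun y => (y j : ℂ) * v y))]
  · calc _ ≤ ∑ _j : Fin n, ENNReal.ofReal (2 * C1) *
          (BQ n k v ^ (1 - 1 / k) * DQ n k v ^ (1 / k)) :=
          Finset.sum_le_sum (fun j _ => hj j)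
      _ = _ := by
          rw [Finset.sum_const, Finset.card_univ, Fintype.card_fin, nsmul_eq_mul,
            ENNReal.ofReal_mul hn'.le, ENNReal.ofReal_natCast]
          ring
  · intro j
    rw [coordSchw_coe]
    exact aux_inv_cont (coordSchw j v) (om_cont (by linarith)) (fun x => by positivity)
      (fun x => aux_pow_le (by positivity) (by linarith) (by linarith))

/-- Lemma A.1: for `n ≥ 1`, `1 < k < 2` there is `C` such that for all Schwartz `v`:
`‖⟨ω⟩^{k−1} x v‖₂ ≤ C(‖⟨ω⟩^k v‖₂ + ‖⟨x⟩^k v‖₂)`; equivalently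
`‖ω^{k−1} x v‖₂ ≤ C ‖ω^k v‖₂^{1−1/k} ‖|x|^k v‖₂^{1/k}`; in particular `Σ^k ⊂ V^k` with
`‖v;V^k‖ ≤ C ‖v;Σ^k‖`. -/
theorem stmt_7 (n : ℕ) (hn : 1 ≤ n) (k : ℝ) (hk1 : 1 < k) (hk2 : k < 2) :
    ∃ C : ℝ, 0 < C ∧ ∀ v : SchwartzMap (Vn n) ℂ,
      (eLpNorm (fun x : Vn n => (WithLp.equiv 2 (Fin n → ℂ)).symm
          (fun j => japMul n (k - 1) (fun y => (y j : ℂ) * v y) x)) 2 volume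
        ≤ ENNReal.ofReal C *
          (eLpNorm (japMul n k (fun y => v y)) 2 volume
            + eLpNorm (fun x : Vn n => (((1 + ‖x‖ ^ 2) ^ (k / 2) : ℝ) : ℂ) * v x) 2 volume))
      ∧ (eLpNorm (fun x : Vn n => (WithLp.equiv 2 (Fin n → ℂ)).symm
          (fun j => omMul n (k - 1) (fun y => (y j : ℂ) * v y) x)) 2 volume
        ≤ ENNReal.ofReal C *
          (eLpNorm (omMul n k (fun y => v y)) 2 volume) ^ (1 - 1 / k) *
          (eLpNorm (fun x : Vn n => ((‖x‖ ^ k : ℝ) : ℂ) * v x) 2 volume) ^ (1 / k))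
      ∧ VkNorm n k (fun y => v y) ≤ ENNReal.ofReal C * SigkNorm n k (fun y => v y) := by
  obtain ⟨C1, hC1, h1⟩ := aux_first n hn k hk1 hk2
  obtain ⟨C2, hC2, h2⟩ := aux_second n hn k hk1 hk2
  refine ⟨1 + 2 * C1 + C2, by positivity, fun v => ⟨(h1 v).trans ?_, (h2 v).trans ?_, ?_⟩⟩
  · gcongr; linarith
  · gcongr; linarith
  · unfold VkNorm
    refine sup_le ?_ ((h1 v).trans ?_)
    · calc _ ≤ SigkNorm n k (fun y => v y) := le_sup_left
        _ = ENNReal.ofReal 1 * SigkNorm n k (fun y => v y) := by simp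
        _ ≤ _ := by gcongr; linarith
    · calc _ ≤ ENNReal.ofReal C1 * (SigkNorm n k (fun y => v y) + SigkNorm n k (fun y => v y)) := by
            gcongr
            · exact le_sup_left
            · exact le_sup_right
        _ = ENNReal.ofReal (2 * C1) * SigkNorm n k (fun y => v y) := by
            rw [ENNReal.ofReal_mul (by norm_num), ENNReal.ofReal_ofNat]
            ring
        _ ≤ _ := by gcongr; linarith
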